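/- arXiv:math/9705223 — 2 statements merged into one kernel-verified Lean document; each statement's English description precedes it below -/
import Mathlib

section
/- Let n \ge 2 be an integer. There exists an integer N (depending on n and a) such that for every odd integer q > N: (i) for every integer a \ge 1, N_B(n,q,0,a) = N_B(n,q-2n,1,a-1); (ii) for every integer a \ge 1, N_D(n,q,0,a) = N_D(n,q-(2n-2),1,a-1); (iii) for every even integer a \ge 2, N_C(n,q,0,a) = N_C(n,q-2n,1,a-1); (iv) for every even integer a \ge 2, N_{BC}(n,q,0,a) = N_{BC}(n,q-2n,1,a-1). -/
open Polynomial

/-- `x` avoids the integer interval `[u, v]` in `ZMod q`. -/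
def Avoids {q : ℕ} (x : ZMod q) (u v : ℤ) : Prop :=
  ∀ k : ℤ, u ≤ k → k ≤ v → x ≠ (k : ZMod q)

/-- Count for the type `B` deformation: `x_i`, `x_i - x_j` and `x_i + x_j`
all avoid `[u, v]`. -/
noncomputable def N_B (n q : ℕ) (u v : ℤ) : ℕ :=
  Set.ncard {x : Fin n → ZMod q |
    (∀ i, Avoids (x i) u v) ∧
    ∀ i j : Fin n, i < j → Avoids (x i - x j) u v ∧ Avoids (x i + x j) u v}

/-- Count for the type `C` deformation: `2x_i`, `x_i - x_j` and `x_i + x_j`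
all avoid `[u, v]`. -/
noncomputable def N_C (n q : ℕ) (u v : ℤ) : ℕ :=
  Set.ncard {x : Fin n → ZMod q |
    (∀ i, Avoids (2 * x i) u v) ∧
    ∀ i j : Fin n, i < j → Avoids (x i - x j) u v ∧ Avoids (x i + x j) u v}

/-- Count for the type `BC` deformation: `x_i`, `2x_i`, `x_i - x_j` and `x_i + x_j`
all avoid `[u, v]`. -/
noncomputable def N_BC (n q : ℕ) (u v : ℤ) : ℕ :=
  Set.ncard {x : Fin n → ZMod q |
    (∀ i, Avoids (x i) u v ∧ Avoids (2 * x i) u v) ∧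
    ∀ i j : Fin n, i < j → Avoids (x i - x j) u v ∧ Avoids (x i + x j) u v}

/-- Count for the type `D` deformation: `x_i - x_j` and `x_i + x_j`
avoid `[u, v]`. -/
noncomputable def N_D (n q : ℕ) (u v : ℤ) : ℕ :=
  Set.ncard {x : Fin n → ZMod q |
    ∀ i j : Fin n, i < j → Avoids (x i - x j) u v ∧ Avoids (x i + x j) u v}

/-- `1 + y + y^2 + ... + y^(m-1)`. -/
noncomputable def phi (m : ℕ) : ℚ[X] := ∑ i ∈ Finset.range m, X ^ i

/-- `1 + y^2 + y^4 + ... + y^(2(m-1))`. -/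
noncomputable def phi2 (m : ℕ) : ℚ[X] := ∑ i ∈ Finset.range m, X ^ (2 * i)

/-- For `g = ∑_k g_k y^k`, the sum `∑_k g_k (q - k)^n`. -/
noncomputable def polysum (g : ℚ[X]) (q n : ℕ) : ℚ :=
  ∑ k ∈ Finset.range (g.natDegree + 1), g.coeff k * ((q : ℚ) - (k : ℚ)) ^ n


/-- Signed integer position: `±(z - c)`. -/
def sval (c : ℤ) (b : Bool) (z : ℤ) : ℤ := if b then z - c else -(z - c)

/-- Signed label of a point. -/
def lab {n : ℕ} (b : Bool) (i : Fin n) : ℤ := if b then (i : ℤ) - n else n - (i : ℤ)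

/-- Lexicographic comparison. -/
def LexLt (z L z' L' : ℤ) : Prop := z < z' ∨ (z = z' ∧ L < L')

theorem lab_neg_iff {n : ℕ} (b : Bool) (i : Fin n) : lab b i < 0 ↔ b = true := by
  have := i.isLt
  cases b <;> simp [lab]

theorem lab_pos_iff {n : ℕ} (b : Bool) (i : Fin n) : 0 < lab b i ↔ b = false := by
  have := i.isLt
  cases b <;> simp [lab]

/-- Encoded configurations. -/
def Enc (n q : ℕ) (X : Set (Fin n → ZMod q)) (c : ℤ) (adm : Bool → ℤ → Prop) :
    Set ((Fin n → Bool) × Equiv.Perm (Fin n) × (Fin n → ℤ)) :=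
  {t | (∀ k, adm (t.1 (t.2.1 k)) (t.2.2 k)) ∧
    (∀ k l, k < l → LexLt (t.2.2 k) (lab (t.1 (t.2.1 k)) (t.2.1 k))
      (t.2.2 l) (lab (t.1 (t.2.1 l)) (t.2.1 l))) ∧
    (fun i => ((sval c (t.1 i) (t.2.2 (t.2.1.symm i)) : ℤ) : ZMod q)) ∈ X}

theorem lab_ne {n : ℕ} {b b' : Bool} {i j : Fin n} (h : i ≠ j) :
    lab b i ≠ lab b' j ∧ lab b i + lab b' j ≠ 0 := by
  have h1 := i.isLt
  have h2 := j.isLt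
  have h3 : (i : ℕ) ≠ j := fun h' => h (Fin.ext h')
  cases b <;> cases b' <;> simp [lab] <;> omega

theorem encode (n q : ℕ) (X : Set (Fin n → ZMod q)) (c : ℤ) (adm : Bool → ℤ → Prop)
    (hex : ∀ x : ZMod q, ∃ b z, adm b z ∧ ((sval c b z : ℤ) : ZMod q) = x)
    (huniq : ∀ b z b' z', adm b z → adm b' z' →
      ((sval c b z : ℤ) : ZMod q) = ((sval c b' z' : ℤ) : ZMod q) → b = b' ∧ z = z') :
    X.ncard = (Enc n q X c adm).ncard := by
  symm
  refine Set.ncard_congr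
    (fun t _ => fun i => ((sval c (t.1 i) (t.2.2 (t.2.1.symm i)) : ℤ) : ZMod q)) ?_ ?_ ?_
  · intro t ht
    exact ht.2.2
  · rintro ⟨e, s, z⟩ ⟨e', s', z'⟩ h h' heq
    obtain ⟨h1, h2, -⟩ := h
    obtain ⟨h1', h2', -⟩ := h'
    dsimp only at *
    have key : ∀ i, e i = e' i ∧ z (s.symm i) = z' (s'.symm i) := by
      intro i
      apply huniq _ _ _ _ _ _ (congrFun heq i)
      · simpa using h1 (s.symm i)
      · simpa using h1' (s'.symm i)
    have he : e = e' := funext fun i => (key i).1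
    subst he
    let f : Fin n → ℤ ×ₗ ℤ := fun i => toLex (z (s.symm i), lab (e i) i)
    have hf' : f = fun i => toLex (z' (s'.symm i), lab (e i) i) := by
      funext i
      simp only [f, (key i).2]
    have m1 : StrictMono (f ∘ s) := by
      intro k l hkl
      have := h2 k l hkl
      simpa [f, Prod.Lex.lt_iff, LexLt] using this
    have m2 : StrictMono (f ∘ s') := by
      intro k l hkl
      have := h2' k l hkl
      simpa [hf', Prod.Lex.lt_iff, LexLt] using this
    have m3 := Tuple.unique_monotone m1.monotone m2.monotone
    have finj : Function.Injective f := by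
      have := m1.injective
      exact (Function.Injective.of_comp_iff' f s.bijective).1 this
    have hs : s = s' := by
      ext1 k
      exact finj (congrFun m3 k)
    subst hs
    have hz : z = z' := by
      funext k
      simpa using (key (s k)).2
    rw [hz]
  · intro x hx
    choose b w hbw hx' using hex
    let e : Fin n → Bool := fun i => b (x i)
    let f : Fin n → ℤ ×ₗ ℤ := fun i => toLex (w (x i), lab (e i) i)
    have finj : Function.Injective f := by
      intro i j hij
      by_contra hne
      have h1 : lab (e i) i = lab (e j) j := congrArg (fun p => (ofLex p).2) hij
      exact (lab_ne hne).1 h1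
    have hmono : StrictMono (f ∘ Tuple.sort f) :=
      (Tuple.monotone_sort f).strictMono_of_injective (finj.comp (Tuple.sort f).injective)
    refine ⟨⟨e, Tuple.sort f, fun k => w (x (Tuple.sort f k))⟩, ⟨?_, ?_, ?_⟩, ?_⟩
    · intro k
      exact hbw _
    · intro k l hkl
      have := hmono hkl
      simpa [f, Prod.Lex.lt_iff, LexLt] using this
    · convert hx using 1
      funext i
      simp only [Equiv.apply_symm_apply, e]
      exact hx' _
    · funext i
      simp only [Equiv.apply_symm_apply, e]
      exact hx' _

theorem shift_count (n q q' : ℕ) (X : Set (Fin n → ZMod q)) (X' : Set (Fin n → ZMod q'))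
    (c c' d : ℤ) (adm adm' : Bool → ℤ → Prop)
    (h : ∀ e s z, (e, s, z) ∈ Enc n q X c adm ↔
      (e, s, fun k => z k - ((k : ℕ) : ℤ) - d) ∈ Enc n q' X' c' adm') :
    (Enc n q X c adm).ncard = (Enc n q' X' c' adm').ncard := by
  refine Set.ncard_congr (fun t _ => (t.1, t.2.1, fun k => t.2.2 k - ((k : ℕ) : ℤ) - d)) ?_ ?_ ?_
  · rintro ⟨e, s, z⟩ ht
    exact (h e s z).1 ht
  · rintro ⟨e, s, z⟩ ⟨e', s', z'⟩ _ _ heq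
    simp only [Prod.mk.injEq] at heq ⊢
    refine ⟨heq.1, heq.2.1, ?_⟩
    funext k
    have := congrFun heq.2.2 k
    omega
  · rintro ⟨e, s, z⟩ ht
    have hz : (fun k : Fin n => (z k + ((k : ℕ) : ℤ) + d) - ((k : ℕ) : ℤ) - d) = z := by
      funext k
      ring
    refine ⟨(e, s, fun k => z k + ((k : ℕ) : ℤ) + d), ?_, ?_⟩
    · rw [h, hz]
      exact ht
    · simp only [hz]

theorem avoids_int (q : ℕ) (t u v : ℤ) (h1 : -(q : ℤ) < t) (h2 : t < q) (hu : 0 ≤ u)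
    (hv : v < q) :
    Avoids (t : ZMod q) u v ↔ ¬ (u ≤ t ∧ t ≤ v) ∧ ¬ (u ≤ t + q ∧ t + q ≤ v) := by
  unfold Avoids
  constructor
  · intro h
    refine ⟨fun h' => h t h'.1 h'.2 rfl, fun h' => h (t + q) h'.1 h'.2 ?_⟩
    push_cast
    simp
  · rintro ⟨ha, hb⟩ k hk1 hk2 heq
    rw [ZMod.intCast_eq_intCast_iff_dvd_sub] at heq
    obtain ⟨r, hr⟩ := heq
    have hr1 : r < 2 := by
      by_contra hc
      push Not at hc
      nlinarith
    have hr2 : -1 < r := by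
      by_contra hc
      push Not at hc
      nlinarith
    have : r = 0 ∨ r = 1 := by omega
    rcases this with rfl | rfl
    · apply ha
      constructor <;> linarith
    · apply hb
      constructor <;> linarith

theorem pairs_sort {n : ℕ} (s : Equiv.Perm (Fin n)) (R : Fin n → Fin n → Prop) :
    (∀ i j, i < j → R i j) ↔
      ∀ k l, k < l → (s k < s l → R (s k) (s l)) ∧ (s l < s k → R (s l) (s k)) := by
  constructor
  · intro h k l _
    exact ⟨h _ _, h _ _⟩
  · intro h i j hij
    have hne : s.symm i ≠ s.symm j := fun h' => hij.ne (s.symm.injective h')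
    rcases lt_or_gt_of_ne hne with hlt | hlt
    · simpa using (h _ _ hlt).1 (by simpa using hij)
    · simpa using (h _ _ hlt).2 (by simpa using hij)

/-- Admissibility when the centre is `0`. -/
def admZ (m : ℤ) (b : Bool) (z : ℤ) : Prop := 0 ≤ z ∧ z ≤ m ∧ (z = 0 → b = false)

/-- Admissibility when the centre is `m`. -/
def admM (m : ℤ) (b : Bool) (z : ℤ) : Prop := 0 ≤ z ∧ z ≤ m ∧ (z = m → b = true)

theorem int_small_eq {q : ℕ} {s t : ℤ} (h : ((s : ℤ) : ZMod q) = (t : ℤ))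
    (h1 : s - t < q) (h2 : t - s < q) : s = t := by
  rw [ZMod.intCast_eq_intCast_iff_dvd_sub] at h
  obtain ⟨r, hr⟩ := h
  have hr1 : r < 1 := by
    by_contra hc
    push Not at hc
    nlinarith
  have hr2 : -1 < r := by
    by_contra hc
    push Not at hc
    nlinarith
  have : r = 0 := by omega
  subst this
  linarith

theorem exists_rep (m : ℕ) (x : ZMod (2 * m + 1)) :
    ∃ y : ℤ, -(m : ℤ) ≤ y ∧ y ≤ m ∧ ((y : ℤ) : ZMod (2 * m + 1)) = x := by
  have hlt := ZMod.val_lt x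
  by_cases h : x.val ≤ m
  · exact ⟨x.val, by omega, by omega, by simp⟩
  · refine ⟨(x.val : ℤ) - ((2 * m + 1 : ℕ) : ℤ), by omega, by omega, ?_⟩
    rw [Int.cast_sub, Int.cast_natCast, Int.cast_natCast, ZMod.natCast_self]
    simp

theorem encodeZ (n m : ℕ) (X : Set (Fin n → ZMod (2 * m + 1))) :
    X.ncard = (Enc n (2 * m + 1) X 0 (admZ m)).ncard := by
  apply encode
  · intro x
    obtain ⟨y, h1, h2, h3⟩ := exists_rep m x
    by_cases hy : 0 < y
    · exact ⟨true, y, ⟨by omega, by omega, by omega⟩, by simpa [sval] using h3⟩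
    · exact ⟨false, -y, ⟨by omega, by omega, by simp⟩, by simpa [sval] using h3⟩
  · rintro b z b' z' ⟨h1, h2, h3⟩ ⟨h1', h2', h3'⟩ heq
    have := int_small_eq heq (by cases b <;> cases b' <;> simp [sval] <;> omega)
      (by cases b <;> cases b' <;> simp [sval] <;> omega)
    cases b <;> cases b' <;> simp [sval] at this h3 h3' ⊢ <;> omega

theorem encodeM (n m : ℕ) (X : Set (Fin n → ZMod (2 * m + 1))) :
    X.ncard = (Enc n (2 * m + 1) X m (admM m)).ncard := by
  apply encode
  · intro x
    obtain ⟨y, h1, h2, h3⟩ := exists_rep m x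
    by_cases hy : 0 < y
    · refine ⟨false, m - y, ⟨by omega, by omega, by omega⟩, ?_⟩
      rw [← h3]
      congr 1
      simp [sval]
    · refine ⟨true, m + y, ⟨by omega, by omega, by simp⟩, ?_⟩
      rw [← h3]
      congr 1
      simp [sval]
  · rintro b z b' z' ⟨h1, h2, h3⟩ ⟨h1', h2', h3'⟩ heq
    have := int_small_eq heq (by cases b <;> cases b' <;> simp [sval] <;> omega)
      (by cases b <;> cases b' <;> simp [sval] <;> omega)
    cases b <;> cases b' <;> simp [sval] at this h3 h3' ⊢ <;> omega

/-- The pair condition on residues. -/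
def PairC {q : ℕ} (u v : ℤ) (x y : ZMod q) : Prop := Avoids (x - y) u v ∧ Avoids (x + y) u v

theorem pairC_int (q : ℕ) (s t u v : ℤ) (h1 : -(q : ℤ) < s - t) (h2 : s - t < q)
    (h3 : -(q : ℤ) < s + t) (h4 : s + t < q) (hu : 0 ≤ u) (hv : v < q) :
    PairC u v ((s : ℤ) : ZMod q) ((t : ℤ) : ZMod q) ↔
      (¬ (u ≤ s - t ∧ s - t ≤ v) ∧ ¬ (u ≤ s - t + q ∧ s - t + q ≤ v)) ∧
      (¬ (u ≤ s + t ∧ s + t ≤ v) ∧ ¬ (u ≤ s + t + q ∧ s + t + q ≤ v)) := by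
  unfold PairC
  rw [← avoids_int q (s - t) u v h1 h2 hu hv, ← avoids_int q (s + t) u v h3 h4 hu hv]
  push_cast
  rfl

/-- Symmetrised pair condition. -/
def PairS {n : ℕ} (q : ℕ) (u v c : ℤ) (b b' : Bool) (i j : Fin n) (z z' : ℤ) : Prop :=
  (i < j → PairC u v ((sval c b z : ℤ) : ZMod q) ((sval c b' z' : ℤ) : ZMod q)) ∧
  (j < i → PairC u v ((sval c b' z' : ℤ) : ZMod q) ((sval c b z : ℤ) : ZMod q))

theorem pair_src {n : ℕ} (m a : ℕ) (ham : a < m) (b b' : Bool) (i j : Fin n) (hij : i ≠ j)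
    (z z' : ℤ) (hz : admZ m b z) (hz' : admZ m b' z') (hlex : LexLt z (lab b i) z' (lab b' j)) :
    PairS (2 * m + 1) 0 a 0 b b' i j z z' ↔
      z < z' ∧ (lab b' j < lab b i → a < z' - z) ∧ (lab b i + lab b' j < 0 → a < z + z') ∧
      (0 < lab b i + lab b' j → a < 2 * m + 1 - z - z') := by
  obtain ⟨h1, h2, h3⟩ := hz
  obtain ⟨h1', h2', h3'⟩ := hz'
  have hi := i.isLt
  have hj := j.isLt
  have hij' : (i : ℕ) ≠ j := fun h' => hij (Fin.ext h')
  unfold PairS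
  rw [pairC_int, pairC_int, Fin.lt_def, Fin.lt_def]
  · unfold LexLt at hlex
    cases b <;> cases b' <;> simp [sval, lab] at hlex h3 h3' ⊢ <;> omega
  all_goals first | omega | (cases b <;> cases b' <;> simp [sval] <;> omega)

theorem pair_tgtZ {n : ℕ} (m a : ℕ) (ham : a < m) (b b' : Bool) (i j : Fin n) (hij : i ≠ j)
    (z z' : ℤ) (hz : admZ m b z) (hz' : admZ m b' z') (hlex : LexLt z (lab b i) z' (lab b' j)) :
    PairS (2 * m + 1) 1 ((a : ℤ) - 1) 0 b b' i j z z' ↔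
      (lab b' j < lab b i → a ≤ z' - z) ∧ (lab b i + lab b' j < 0 → a ≤ z + z') ∧
      (0 < lab b i + lab b' j → a ≤ 2 * m + 1 - z - z') := by
  obtain ⟨h1, h2, h3⟩ := hz
  obtain ⟨h1', h2', h3'⟩ := hz'
  have hi := i.isLt
  have hj := j.isLt
  have hij' : (i : ℕ) ≠ j := fun h' => hij (Fin.ext h')
  unfold PairS
  rw [pairC_int, pairC_int, Fin.lt_def, Fin.lt_def]
  · unfold LexLt at hlex
    cases b <;> cases b' <;> simp [sval, lab] at hlex h3 h3' ⊢ <;> omega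
  all_goals first | omega | (cases b <;> cases b' <;> simp [sval] <;> omega)

theorem pair_tgtM {n : ℕ} (m a : ℕ) (ham : a < m) (b b' : Bool) (i j : Fin n) (hij : i ≠ j)
    (z z' : ℤ) (hz : admM m b z) (hz' : admM m b' z') (hlex : LexLt z (lab b i) z' (lab b' j)) :
    PairS (2 * m + 1) 1 ((a : ℤ) - 1) m b b' i j z z' ↔
      (lab b' j < lab b i → a ≤ z' - z) ∧ (lab b i + lab b' j < 0 → a ≤ z + z' + 1) ∧
      (0 < lab b i + lab b' j → a ≤ 2 * m - z - z') := by
  obtain ⟨h1, h2, h3⟩ := hz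
  obtain ⟨h1', h2', h3'⟩ := hz'
  have hi := i.isLt
  have hj := j.isLt
  have hij' : (i : ℕ) ≠ j := fun h' => hij (Fin.ext h')
  unfold PairS
  rw [pairC_int, pairC_int, Fin.lt_def, Fin.lt_def]
  · unfold LexLt at hlex
    cases b <;> cases b' <;> simp [sval, lab] at hlex h3 h3' ⊢ <;> omega
  all_goals first | omega | (cases b <;> cases b' <;> simp [sval] <;> omega)

/-- The set of tuples with single condition `P` and the pair conditions. -/
def XS (n q : ℕ) (u v : ℤ) (P : ZMod q → Prop) : Set (Fin n → ZMod q) :=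
  {x | (∀ i, P (x i)) ∧ ∀ i j : Fin n, i < j → PairC u v (x i) (x j)}

/-- Sorted integer conditions. -/
def Srt {n : ℕ} (A : ℤ → ℤ → Prop) (Q : ℤ → ℤ → Prop) (R : ℤ → ℤ → ℤ → ℤ → Prop)
    (L z : Fin n → ℤ) : Prop :=
  (∀ k, A (L k) (z k)) ∧ (∀ k l, k < l → LexLt (z k) (L k) (z l) (L l)) ∧
  (∀ k, Q (L k) (z k)) ∧ (∀ k l, k < l → R (L k) (L l) (z k) (z l))

theorem mem_enc {n q : ℕ} {u v c : ℤ} {P : ZMod q → Prop} {adm : Bool → ℤ → Prop}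
    {A : ℤ → ℤ → Prop} {Q : ℤ → ℤ → Prop} {R : ℤ → ℤ → ℤ → ℤ → Prop}
    (hA : ∀ b (i : Fin n) z, adm b z ↔ A (lab b i) z)
    (hQ : ∀ b (i : Fin n) z, adm b z → (P ((sval c b z : ℤ) : ZMod q) ↔ Q (lab b i) z))
    (hR : ∀ b b' (i j : Fin n), i ≠ j → ∀ z z', adm b z → adm b' z' →
      LexLt z (lab b i) z' (lab b' j) →
      (PairS q u v c b b' i j z z' ↔ R (lab b i) (lab b' j) z z'))
    (e : Fin n → Bool) (s : Equiv.Perm (Fin n)) (z : Fin n → ℤ) :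
    (e, s, z) ∈ Enc n q (XS n q u v P) c adm ↔
      Srt A Q R (fun k => lab (e (s k)) (s k)) z := by
  unfold Enc Srt XS
  simp only [Set.mem_ofPred_eq]
  rw [pairs_sort s (fun i j => PairC u v ((sval c (e i) (z (s.symm i)) : ℤ) : ZMod q)
    ((sval c (e j) (z (s.symm j)) : ℤ) : ZMod q))]
  have hP : (∀ i, P ((sval c (e i) (z (s.symm i)) : ℤ) : ZMod q)) ↔
      ∀ k, P ((sval c (e (s k)) (z k) : ℤ) : ZMod q) := by
    constructor
    · intro h k
      simpa using h (s k)
    · intro h i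
      simpa using h (s.symm i)
  rw [hP]
  simp only [Equiv.symm_apply_apply]
  rw [← forall_congr' (fun k => hA (e (s k)) (s k) (z k))]
  apply and_congr_right
  intro h1
  apply and_congr_right
  intro h2
  apply and_congr
  · exact forall_congr' fun k => hQ _ _ _ (h1 k)
  · refine forall_congr' fun k => forall_congr' fun l => forall_congr' fun hkl => ?_
    exact hR _ _ _ _ (fun h => hkl.ne (s.injective h)) _ _ (h1 k) (h1 l) (h2 k l hkl)

/-- Admissibility in terms of labels. -/
def AZ (m : ℤ) (L z : ℤ) : Prop := 0 ≤ z ∧ z ≤ m ∧ (z = 0 → 0 < L)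

/-- Admissibility in terms of labels. -/
def AM (m : ℤ) (L z : ℤ) : Prop := 0 ≤ z ∧ z ≤ m ∧ (z = m → L < 0)

theorem admZ_iff {n : ℕ} (m : ℤ) (b : Bool) (i : Fin n) (z : ℤ) :
    admZ m b z ↔ AZ m (lab b i) z := by
  unfold admZ AZ
  rw [lab_pos_iff]

theorem admM_iff {n : ℕ} (m : ℤ) (b : Bool) (i : Fin n) (z : ℤ) :
    admM m b z ↔ AM m (lab b i) z := by
  unfold admM AM
  rw [lab_neg_iff]

/-- Source pair condition. -/
def RS (m a : ℤ) (L K z y : ℤ) : Prop :=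
  z < y ∧ (K < L → a < y - z) ∧ (L + K < 0 → a < z + y) ∧
      (0 < L + K → a < 2 * m + 1 - z - y)

/-- Target pair condition; `e = 0` for centre `0`, `e = 1` for centre `m`. -/
def RT (m a e : ℤ) (L L' z z' : ℤ) : Prop :=
  (L' < L → a ≤ z' - z) ∧ (L + L' < 0 → a ≤ z + z' + e) ∧
      (0 < L + L' → a ≤ 2 * m + 1 - e - z - z')

theorem chain {n : ℕ} (a d : ℤ) (L z w : Fin n → ℤ)
    (hw : ∀ k, z k = w k + ((k : ℕ) : ℤ) + d)
    (hz : ∀ k l, k < l → z k < z l) (h1 : ∀ k l, k < l → L l < L k → a < z l - z k) :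
    ∀ t : ℕ, ∀ k l : Fin n, (l : ℕ) = k + t → w k ≤ w l ∧ (L l < L k → a ≤ w l - w k) := by
  intro t
  induction t with
  | zero =>
    intro k l h
    have : l = k := Fin.ext (by omega)
    subst this
    exact ⟨le_refl _, fun h => absurd h (lt_irrefl _)⟩
  | succ t ih =>
    intro k l h
    have hl := l.isLt
    let r : Fin n := ⟨k + t, by omega⟩
    have hr : (r : ℕ) = k + t := rfl
    have hrl : r < l := Fin.lt_def.2 (by omega)
    obtain ⟨i1, i2⟩ := ih k r hr
    have e1 := hw r
    have e2 := hw l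
    have e3 := hz r l hrl
    have e4 := h1 r l hrl
    have hrl' : ((l : ℕ) : ℤ) = ((r : ℕ) : ℤ) + 1 := by omega
    refine ⟨by omega, fun hlt => ?_⟩
    by_cases hc : L l < L r
    · have := e4 hc
      omega
    · have := i2 (by omega)
      omega

theorem chain' {n : ℕ} (a d : ℤ) (L z w : Fin n → ℤ)
    (hw : ∀ k, z k = w k + ((k : ℕ) : ℤ) + d)
    (hz : ∀ k l, k < l → z k < z l) (h1 : ∀ k l, k < l → L l < L k → a < z l - z k)
    (k l : Fin n) (hkl : k ≤ l) : w k ≤ w l ∧ (L l < L k → a ≤ w l - w k) := by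
  have := Fin.le_def.1 hkl
  exact chain a d L z w hw hz h1 (l - k) k l (by omega)

theorem coreB {n : ℕ} (hn : 2 ≤ n) (m a : ℤ) (ha : 1 ≤ a) (L z w : Fin n → ℤ)
    (hL0 : ∀ k, L k ≠ 0) (hL : ∀ k l, k ≠ l → L k ≠ L l)
    (hw : ∀ k, z k = w k + ((k : ℕ) : ℤ) + 1) :
    Srt (AZ (m + n)) (fun L z => z ≠ 0 ∧ (L < 0 → a < z)) (RS (m + n) a) L z ↔
    Srt (AZ m) (fun L z => L < 0 → a ≤ z) (RT m a 0) L w := by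
  constructor
  · rintro ⟨h1, h2, h3, h4⟩
    have ch := chain' a 1 L z w hw (fun k l h => (h4 k l h).1) (fun k l h => (h4 k l h).2.1)
    let f0 : Fin n := ⟨0, by omega⟩
    let g0 : Fin n := ⟨n - 1, by omega⟩
    let g1 : Fin n := ⟨n - 2, by omega⟩
    have hf0 : ((f0 : ℕ) : ℤ) = 0 := by simp [f0]
    have hg0 : ((g0 : ℕ) : ℤ) = n - 1 := by simp only [g0]; omega
    have hg1 : ((g1 : ℕ) : ℤ) = n - 2 := by simp only [g1]; omega
    have f0le : ∀ k, f0 ≤ k := fun k => Fin.le_def.2 (by omega)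
    have leg0 : ∀ k, k ≤ g0 := fun k => Fin.le_def.2 (by omega)
    have g1g0 : g1 < g0 := Fin.lt_def.2 (by omega)
    have wf0 := hw f0
    have wg0 := hw g0
    have wg1 := hw g1
    have af0 := h1 f0
    have ag0 := h1 g0
    have sf0 := h3 f0
    have rg := h4 g1 g0 g1g0
    have hlow : ∀ k, 0 ≤ w k ∧ (L k < 0 → a ≤ w k) := by
      intro k
      have c0 := ch f0 k (f0le k)
      have := hL0 k
      have := hL0 f0
      unfold AZ at af0
      dsimp only at sf0
      omega
    have hhigh : ∀ k, w k ≤ m := by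
      intro k
      have c0 := ch k g0 (leg0 k)
      unfold AZ at ag0
      omega
    refine ⟨?_, ?_, ?_, ?_⟩
    · intro k
      have := hlow k
      have := hhigh k
      have := hL0 k
      unfold AZ
      omega
    · intro k l hkl
      have := ch k l hkl.le
      have := hL k l hkl.ne
      unfold LexLt
      omega
    · intro k
      exact (hlow k).2
    · intro k l hkl
      have c1 := ch k l hkl.le
      have hk := hlow k
      have hl := hlow l
      have hk' := hhigh k
      have hl' := hhigh l
      have hg' := hhigh g0
      have kg1 : k ≤ g1 := Fin.le_def.2 (by
        have := Fin.lt_def.1 hkl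
        have := l.isLt
        omega)
      have c2 := ch k g1 kg1
      have c3 := ch l g0 (leg0 l)
      have c4 := ch g1 g0 g1g0.le
      have := hL0 k
      have := hL0 l
      unfold RS at rg
      unfold RT
      refine ⟨by omega, by omega, ?_⟩
      intro hpos
      by_cases d1 : L g1 < L k
      · have := c2.2 d1
        omega
      · by_cases d2 : L g0 < L l
        · have := c3.2 d2
          omega
        · have := rg.2.2.2 (by omega)
          omega
  · rintro ⟨h1, h2, h3, h4⟩
    refine ⟨?_, ?_, ?_, ?_⟩
    · intro k
      have := h1 k
      have := hw k
      have := k.isLt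
      unfold AZ at *
      omega
    · intro k l hkl
      have := h2 k l hkl
      have := hw k
      have := hw l
      have := Fin.lt_def.1 hkl
      unfold LexLt at *
      omega
    · intro k
      have := h3 k
      have := h1 k
      have := hw k
      unfold AZ at *
      dsimp only at *
      omega
    · intro k l hkl
      have := h2 k l hkl
      have := h4 k l hkl
      have := hw k
      have := hw l
      have := k.isLt
      have := l.isLt
      have := Fin.lt_def.1 hkl
      have := h3 k
      have := h3 l
      have := h1 k
      have := h1 l
      unfold LexLt RT AZ at *
      unfold RS
      dsimp only at *
      refine ⟨by omega, by omega, by omega, by omega⟩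
theorem coreBC {n : ℕ} (hn : 2 ≤ n) (m a : ℤ) (ha : 1 ≤ a) (hev : Even a) (L z w : Fin n → ℤ)
    (hL0 : ∀ k, L k ≠ 0) (hL : ∀ k l, k ≠ l → L k ≠ L l)
    (hw : ∀ k, z k = w k + ((k : ℕ) : ℤ) + 1) :
    Srt (AZ (m + n)) (fun L z => z ≠ 0 ∧ (L < 0 → a < z) ∧ (0 < L → a < 2 * (m + n) + 1 - 2 * z)) (RS (m + n) a) L z ↔
    Srt (AZ m) (fun L z => (L < 0 → a ≤ z) ∧ (0 < L → a ≤ 2 * m + 1 - 2 * z)) (RT m a 0) L w := by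
  constructor
  · rintro ⟨h1, h2, h3, h4⟩
    have ch := chain' a 1 L z w hw (fun k l h => (h4 k l h).1) (fun k l h => (h4 k l h).2.1)
    let f0 : Fin n := ⟨0, by omega⟩
    let g0 : Fin n := ⟨n - 1, by omega⟩
    let g1 : Fin n := ⟨n - 2, by omega⟩
    have hf0 : ((f0 : ℕ) : ℤ) = 0 := by simp [f0]
    have hg0 : ((g0 : ℕ) : ℤ) = n - 1 := by simp only [g0]; omega
    have hg1 : ((g1 : ℕ) : ℤ) = n - 2 := by simp only [g1]; omega
    have f0le : ∀ k, f0 ≤ k := fun k => Fin.le_def.2 (by omega)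
    have leg0 : ∀ k, k ≤ g0 := fun k => Fin.le_def.2 (by omega)
    have g1g0 : g1 < g0 := Fin.lt_def.2 (by omega)
    have wf0 := hw f0
    have wg0 := hw g0
    have wg1 := hw g1
    have af0 := h1 f0
    have ag0 := h1 g0
    have sf0 := h3 f0
    have rg := h4 g1 g0 g1g0
    have hlow : ∀ k, 0 ≤ w k ∧ (L k < 0 → a ≤ w k) := by
      intro k
      have c0 := ch f0 k (f0le k)
      have := hL0 k
      have := hL0 f0
      unfold AZ at af0
      dsimp only at sf0
      omega
    have hhigh : ∀ k, w k ≤ m := by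
      intro k
      have c0 := ch k g0 (leg0 k)
      unfold AZ at ag0
      omega
    refine ⟨?_, ?_, ?_, ?_⟩
    · intro k
      have := hlow k
      have := hhigh k
      have := hL0 k
      unfold AZ
      omega
    · intro k l hkl
      have := ch k l hkl.le
      have := hL k l hkl.ne
      unfold LexLt
      omega
    · intro k
      refine ⟨(hlow k).2, fun hpos => ?_⟩
      have c3 := ch k g0 (leg0 k)
      have hg' := hhigh g0
      have sg0 := h3 g0
      dsimp only at sg0
      by_cases d2 : L g0 < L k
      · have := c3.2 d2
        omega
      · have := sg0.2.2 (by omega)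
        omega
    · intro k l hkl
      have c1 := ch k l hkl.le
      have hk := hlow k
      have hl := hlow l
      have hk' := hhigh k
      have hl' := hhigh l
      have hg' := hhigh g0
      have kg1 : k ≤ g1 := Fin.le_def.2 (by
        have := Fin.lt_def.1 hkl
        have := l.isLt
        omega)
      have c2 := ch k g1 kg1
      have c3 := ch l g0 (leg0 l)
      have c4 := ch g1 g0 g1g0.le
      have := hL0 k
      have := hL0 l
      unfold RS at rg
      unfold RT
      refine ⟨by omega, by omega, ?_⟩
      intro hpos
      by_cases d1 : L g1 < L k
      · have := c2.2 d1
        omega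
      · by_cases d2 : L g0 < L l
        · have := c3.2 d2
          omega
        · have := rg.2.2.2 (by omega)
          omega
  · rintro ⟨h1, h2, h3, h4⟩
    obtain ⟨a', ha'⟩ := hev
    refine ⟨?_, ?_, ?_, ?_⟩
    · intro k
      have := h1 k
      have := hw k
      have := k.isLt
      unfold AZ at *
      omega
    · intro k l hkl
      have := h2 k l hkl
      have := hw k
      have := hw l
      have := Fin.lt_def.1 hkl
      unfold LexLt at *
      omega
    · intro k
      have := h3 k
      have := h1 k
      have := hw k
      have := k.isLt
      unfold AZ at *
      dsimp only at *
      omega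
    · intro k l hkl
      have := h2 k l hkl
      have := h4 k l hkl
      have := hw k
      have := hw l
      have := k.isLt
      have := l.isLt
      have := Fin.lt_def.1 hkl
      have := h3 k
      have := h3 l
      have := h1 k
      have := h1 l
      unfold LexLt RT AZ at *
      unfold RS
      dsimp only at *
      refine ⟨by omega, by omega, by omega, by omega⟩
theorem coreD {n : ℕ} (hn : 2 ≤ n) (m a : ℤ) (ha : 1 ≤ a) (L z w : Fin n → ℤ)
    (hL0 : ∀ k, L k ≠ 0) (hL : ∀ k l, k ≠ l → L k ≠ L l)
    (hw : ∀ k, z k = w k + ((k : ℕ) : ℤ) + 0) :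
    Srt (AZ (m + n - 1)) (fun _ _ => True) (RS (m + n - 1) a) L z ↔
    Srt (AZ m) (fun _ _ => True) (RT m a 0) L w := by
  constructor
  · rintro ⟨h1, h2, h3, h4⟩
    have ch := chain' a 0 L z w hw (fun k l h => (h4 k l h).1) (fun k l h => (h4 k l h).2.1)
    let f0 : Fin n := ⟨0, by omega⟩
    let g0 : Fin n := ⟨n - 1, by omega⟩
    let g1 : Fin n := ⟨n - 2, by omega⟩
    have hf0 : ((f0 : ℕ) : ℤ) = 0 := by simp [f0]
    have hg0 : ((g0 : ℕ) : ℤ) = n - 1 := by simp only [g0]; omega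
    have hg1 : ((g1 : ℕ) : ℤ) = n - 2 := by simp only [g1]; omega
    have f0le : ∀ k, f0 ≤ k := fun k => Fin.le_def.2 (by omega)
    have leg0 : ∀ k, k ≤ g0 := fun k => Fin.le_def.2 (by omega)
    let f1 : Fin n := ⟨1, by omega⟩
    have hf1 : ((f1 : ℕ) : ℤ) = 1 := by simp [f1]
    have f0f1 : f0 < f1 := Fin.lt_def.2 (by omega)
    have wf1 := hw f1
    have rf := h4 f0 f1 f0f1
    have g1g0 : g1 < g0 := Fin.lt_def.2 (by omega)
    have wf0 := hw f0
    have wg0 := hw g0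
    have wg1 := hw g1
    have af0 := h1 f0
    have ag0 := h1 g0
    have rg := h4 g1 g0 g1g0
    have hlow : ∀ k, 0 ≤ w k ∧ (w k = 0 → 0 < L k) := by
      intro k
      have c0 := ch f0 k (f0le k)
      have := hL0 k
      have := hL0 f0
      unfold AZ at af0
      omega
    have hhigh : ∀ k, w k ≤ m := by
      intro k
      have c0 := ch k g0 (leg0 k)
      unfold AZ at ag0
      omega
    refine ⟨?_, ?_, ?_, ?_⟩
    · intro k
      have := hlow k
      have := hhigh k
      have := hL0 k
      unfold AZ
      omega
    · intro k l hkl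
      have := ch k l hkl.le
      have := hL k l hkl.ne
      unfold LexLt
      omega
    · intro k
      trivial
    · intro k l hkl
      have c1 := ch k l hkl.le
      have hk := hlow k
      have hl := hlow l
      have hk' := hhigh k
      have hl' := hhigh l
      have hg' := hhigh g0
      have kg1 : k ≤ g1 := Fin.le_def.2 (by
        have := Fin.lt_def.1 hkl
        have := l.isLt
        omega)
      have c2 := ch k g1 kg1
      have c3 := ch l g0 (leg0 l)
      have c4 := ch g1 g0 g1g0.le
      have := hL0 k
      have := hL0 l
      unfold RS at rg
      have f1l : f1 ≤ l := Fin.le_def.2 (by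
        have := Fin.lt_def.1 hkl
        omega)
      have c5 := ch f0 k (f0le k)
      have c6 := ch f1 l f1l
      have hf' := hlow f0
      have hf'' := hlow f1
      unfold RS at rf
      unfold RT
      refine ⟨by omega, ?_, ?_⟩
      · intro hneg
        by_cases d1 : L k < L f0
        · have := c5.2 d1
          omega
        · by_cases d2 : L l < L f1
          · have := c6.2 d2
            omega
          · have := rf.2.2.1 (by omega)
            omega
      intro hpos
      by_cases d1 : L g1 < L k
      · have := c2.2 d1
        omega
      · by_cases d2 : L g0 < L l
        · have := c3.2 d2
          omega
        · have := rg.2.2.2 (by omega)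
          omega
  · rintro ⟨h1, h2, h3, h4⟩
    refine ⟨?_, ?_, ?_, ?_⟩
    · intro k
      have := h1 k
      have := hw k
      have := k.isLt
      unfold AZ at *
      omega
    · intro k l hkl
      have := h2 k l hkl
      have := hw k
      have := hw l
      have := Fin.lt_def.1 hkl
      unfold LexLt at *
      omega
    · intro k
      trivial
    · intro k l hkl
      have := h2 k l hkl
      have := h4 k l hkl
      have := hw k
      have := hw l
      have := k.isLt
      have := l.isLt
      have := Fin.lt_def.1 hkl
      have := h1 k
      have := h1 l
      unfold LexLt RT AZ at *
      unfold RS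
      refine ⟨by omega, by omega, by omega, by omega⟩

theorem coreC {n : ℕ} (hn : 2 ≤ n) (m a : ℤ) (ha : 1 ≤ a) (L z w : Fin n → ℤ)
    (hL0 : ∀ k, L k ≠ 0) (hL : ∀ k l, k ≠ l → L k ≠ L l)
    (hw : ∀ k, z k = w k + ((k : ℕ) : ℤ) + 1) :
    Srt (AZ (m + n)) (fun L z => z ≠ 0 ∧ (L < 0 → a < 2 * z) ∧
      (0 < L → a < 2 * (m + n) + 1 - 2 * z)) (RS (m + n) a) L z ↔
    Srt (AM m) (fun L z => (L < 0 → a ≤ 2 * z + 1) ∧ (0 < L → a ≤ 2 * m - 2 * z))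
      (RT m a 1) L w := by
  constructor
  · rintro ⟨h1, h2, h3, h4⟩
    have ch := chain' a 1 L z w hw (fun k l h => (h4 k l h).1) (fun k l h => (h4 k l h).2.1)
    let f0 : Fin n := ⟨0, by omega⟩
    let g0 : Fin n := ⟨n - 1, by omega⟩
    have hf0 : ((f0 : ℕ) : ℤ) = 0 := by simp [f0]
    have hg0 : ((g0 : ℕ) : ℤ) = n - 1 := by simp only [g0]; omega
    have f0le : ∀ k, f0 ≤ k := fun k => Fin.le_def.2 (by omega)
    have leg0 : ∀ k, k ≤ g0 := fun k => Fin.le_def.2 (by omega)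
    have wf0 := hw f0
    have wg0 := hw g0
    have af0 := h1 f0
    have ag0 := h1 g0
    have sf0 := h3 f0
    have sg0 := h3 g0
    have nf0 := hL0 f0
    have ng0 := hL0 g0
    unfold AZ at af0 ag0
    dsimp only at sf0 sg0
    have hlow : ∀ k, 0 ≤ w k ∧ (L k < 0 → a ≤ 2 * w k + 1) := by
      intro k
      have c0 := ch f0 k (f0le k)
      have := hL0 k
      omega
    have hhigh : ∀ k, w k ≤ m ∧ (0 < L k → a ≤ 2 * m - 2 * w k) := by
      intro k
      have c0 := ch k g0 (leg0 k)
      have := hL0 k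
      omega
    refine ⟨?_, ?_, ?_, ?_⟩
    · intro k
      have := hlow k
      have := hhigh k
      have := hL0 k
      unfold AM
      omega
    · intro k l hkl
      have := ch k l hkl.le
      have := hL k l hkl.ne
      unfold LexLt
      omega
    · intro k
      exact ⟨(hlow k).2, (hhigh k).2⟩
    · intro k l hkl
      have c1 := ch k l hkl.le
      have hk := hlow k
      have hl := hlow l
      have hk' := hhigh k
      have hl' := hhigh l
      have hg' := hhigh g0
      have hf' := hlow f0
      have c2 := ch k g0 (leg0 k)
      have c3 := ch l g0 (leg0 l)
      have c4 := ch f0 k (f0le k)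
      have c5 := ch f0 l (f0le l)
      refine ⟨by omega, ?_, ?_⟩
      · intro hneg
        by_cases d1 : L k < L f0
        · have := c4.2 d1
          omega
        · by_cases d2 : L l < L f0
          · have := c5.2 d2
            omega
          · have := hf'.2 (by omega)
            omega
      · intro hpos
        by_cases d1 : L g0 < L k
        · have := c2.2 d1
          omega
        · by_cases d2 : L g0 < L l
          · have := c3.2 d2
            omega
          · have := hg'.2 (by omega)
            omega
  · rintro ⟨h1, h2, h3, h4⟩
    refine ⟨?_, ?_, ?_, ?_⟩
    · intro k
      have := h1 k
      have := hw k
      have := k.isLt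
      unfold AZ AM at *
      omega
    · intro k l hkl
      have := h2 k l hkl
      have := hw k
      have := hw l
      have := Fin.lt_def.1 hkl
      unfold LexLt at *
      omega
    · intro k
      have := h3 k
      have := h1 k
      have := hw k
      have := k.isLt
      unfold AM at *
      dsimp only at *
      omega
    · intro k l hkl
      have := h2 k l hkl
      have := h4 k l hkl
      have := hw k
      have := hw l
      have := k.isLt
      have := l.isLt
      have := Fin.lt_def.1 hkl
      have := h3 k
      have := h3 l
      have := h1 k
      have := h1 l
      unfold LexLt RT AM at *
      unfold RS
      dsimp only at *
      refine ⟨by omega, by omega, by omega, by omega⟩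

theorem count_aux {n q q' : ℕ} {u v u' v' c c' d : ℤ} {P : ZMod q → Prop} {P' : ZMod q' → Prop}
    {adm adm' : Bool → ℤ → Prop} {A A' Q Q' : ℤ → ℤ → Prop} {R R' : ℤ → ℤ → ℤ → ℤ → Prop}
    (he : (XS n q u v P).ncard = (Enc n q (XS n q u v P) c adm).ncard)
    (he' : (XS n q' u' v' P').ncard = (Enc n q' (XS n q' u' v' P') c' adm').ncard)
    (hA : ∀ b (i : Fin n) z, adm b z ↔ A (lab b i) z)
    (hQ : ∀ b (i : Fin n) z, adm b z → (P ((sval c b z : ℤ) : ZMod q) ↔ Q (lab b i) z))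
    (hR : ∀ b b' (i j : Fin n), i ≠ j → ∀ z z', adm b z → adm b' z' →
      LexLt z (lab b i) z' (lab b' j) →
      (PairS q u v c b b' i j z z' ↔ R (lab b i) (lab b' j) z z'))
    (hA' : ∀ b (i : Fin n) z, adm' b z ↔ A' (lab b i) z)
    (hQ' : ∀ b (i : Fin n) z, adm' b z → (P' ((sval c' b z : ℤ) : ZMod q') ↔ Q' (lab b i) z))
    (hR' : ∀ b b' (i j : Fin n), i ≠ j → ∀ z z', adm' b z → adm' b' z' →
      LexLt z (lab b i) z' (lab b' j) →
      (PairS q' u' v' c' b b' i j z z' ↔ R' (lab b i) (lab b' j) z z'))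
    (core : ∀ L z w : Fin n → ℤ, (∀ k, L k ≠ 0) → (∀ k l, k ≠ l → L k ≠ L l) →
      (∀ k, z k = w k + ((k : ℕ) : ℤ) + d) → (Srt A Q R L z ↔ Srt A' Q' R' L w)) :
    (XS n q u v P).ncard = (XS n q' u' v' P').ncard := by
  rw [he, he']
  apply shift_count (d := d)
  intro e s z
  rw [mem_enc hA hQ hR, mem_enc hA' hQ' hR']
  apply core
  · intro k h
    have h1 := lab_neg_iff (e (s k)) (s k)
    have h2 := lab_pos_iff (e (s k)) (s k)
    cases hb : e (s k) <;> simp_all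
  · intro k l hkl
    exact (lab_ne (fun h => hkl (s.injective h))).1
  · intro k
    ring

theorem single_int (q : ℕ) (u v c : ℤ) (b : Bool) (z : ℤ) (h1 : -(q : ℤ) < sval c b z)
    (h2 : sval c b z < q) (hu : 0 ≤ u) (hv : v < q) :
    Avoids ((sval c b z : ℤ) : ZMod q) u v ↔ ¬ (u ≤ sval c b z ∧ sval c b z ≤ v) ∧
      ¬ (u ≤ sval c b z + q ∧ sval c b z + q ≤ v) := avoids_int q _ u v h1 h2 hu hv

theorem double_int (q : ℕ) (u v c : ℤ) (b : Bool) (z : ℤ) (h1 : -(q : ℤ) < 2 * sval c b z)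
    (h2 : 2 * sval c b z < q) (hu : 0 ≤ u) (hv : v < q) :
    Avoids (2 * ((sval c b z : ℤ) : ZMod q)) u v ↔
      ¬ (u ≤ 2 * sval c b z ∧ 2 * sval c b z ≤ v) ∧
      ¬ (u ≤ 2 * sval c b z + q ∧ 2 * sval c b z + q ≤ v) := by
  rw [← avoids_int q _ u v h1 h2 hu hv]
  push_cast
  rfl

theorem sB (n m a : ℕ) (ham : a < m) (b : Bool) (i : Fin n) (z : ℤ) (hz : admZ m b z) :
    Avoids ((sval 0 b z : ℤ) : ZMod (2 * m + 1)) 0 a ↔ z ≠ 0 ∧ (lab b i < 0 → a < z) := by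
  obtain ⟨h1, h2, h3⟩ := hz
  rw [single_int, lab_neg_iff]
  · cases b <;> simp [sval] at h3 ⊢ <;> omega
  all_goals first | omega | (cases b <;> simp [sval] <;> omega)

theorem tB (n m a : ℕ) (ham : a < m) (b : Bool) (i : Fin n) (z : ℤ) (hz : admZ m b z) :
    Avoids ((sval 0 b z : ℤ) : ZMod (2 * m + 1)) 1 ((a : ℤ) - 1) ↔ (lab b i < 0 → a ≤ z) := by
  obtain ⟨h1, h2, h3⟩ := hz
  rw [single_int, lab_neg_iff]
  · cases b <;> simp [sval] at h3 ⊢ <;> omega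
  all_goals first | omega | (cases b <;> simp [sval] <;> omega)

theorem sC (n m a : ℕ) (ham : a < m) (b : Bool) (i : Fin n) (z : ℤ) (hz : admZ m b z) :
    Avoids (2 * ((sval 0 b z : ℤ) : ZMod (2 * m + 1))) 0 a ↔
      z ≠ 0 ∧ (lab b i < 0 → a < 2 * z) ∧ (0 < lab b i → a < 2 * m + 1 - 2 * z) := by
  obtain ⟨h1, h2, h3⟩ := hz
  rw [double_int, lab_neg_iff, lab_pos_iff]
  · cases b <;> simp [sval] at h3 ⊢ <;> omega
  all_goals first | omega | (cases b <;> simp [sval] <;> omega)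

theorem tC (n m a : ℕ) (ham : a < m) (b : Bool) (i : Fin n) (z : ℤ) (hz : admM m b z) :
    Avoids (2 * ((sval m b z : ℤ) : ZMod (2 * m + 1))) 1 ((a : ℤ) - 1) ↔
      (lab b i < 0 → a ≤ 2 * z + 1) ∧ (0 < lab b i → a ≤ 2 * m - 2 * z) := by
  obtain ⟨h1, h2, h3⟩ := hz
  rw [double_int, lab_neg_iff, lab_pos_iff]
  · cases b <;> simp [sval] at h3 ⊢ <;> omega
  all_goals first | omega | (cases b <;> simp [sval] <;> omega)

theorem tBC (n m a : ℕ) (ham : a < m) (b : Bool) (i : Fin n) (z : ℤ) (hz : admZ m b z) :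
    (Avoids ((sval 0 b z : ℤ) : ZMod (2 * m + 1)) 1 ((a : ℤ) - 1) ∧
      Avoids (2 * ((sval 0 b z : ℤ) : ZMod (2 * m + 1))) 1 ((a : ℤ) - 1)) ↔
      (lab b i < 0 → a ≤ z) ∧ (0 < lab b i → a ≤ 2 * m + 1 - 2 * z) := by
  rw [tB n m a ham b i z hz]
  obtain ⟨h1, h2, h3⟩ := hz
  rw [double_int, lab_neg_iff, lab_pos_iff]
  · cases b <;> simp [sval] at h3 ⊢ <;> omega
  all_goals first | omega | (cases b <;> simp [sval] <;> omega)

theorem sBC (n m a : ℕ) (ham : a < m) (b : Bool) (i : Fin n) (z : ℤ) (hz : admZ m b z) :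
    (Avoids ((sval 0 b z : ℤ) : ZMod (2 * m + 1)) 0 a ∧
      Avoids (2 * ((sval 0 b z : ℤ) : ZMod (2 * m + 1))) 0 a) ↔
      z ≠ 0 ∧ (lab b i < 0 → a < z) ∧ (0 < lab b i → a < 2 * m + 1 - 2 * z) := by
  rw [sB n m a ham b i z hz, sC n m a ham b i z hz]
  have := hz.1
  omega

theorem pair_tgtZ' {n : ℕ} (m a : ℕ) (ham : a < m) (b b' : Bool) (i j : Fin n) (hij : i ≠ j)
    (z z' : ℤ) (hz : admZ m b z) (hz' : admZ m b' z') (hlex : LexLt z (lab b i) z' (lab b' j)) :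
    PairS (2 * m + 1) 1 ((a : ℤ) - 1) 0 b b' i j z z' ↔ RT m a 0 (lab b i) (lab b' j) z z' := by
  rw [pair_tgtZ m a ham b b' i j hij z z' hz hz' hlex]
  unfold RT
  simp

theorem pair_tgtM' {n : ℕ} (m a : ℕ) (ham : a < m) (b b' : Bool) (i j : Fin n) (hij : i ≠ j)
    (z z' : ℤ) (hz : admM m b z) (hz' : admM m b' z') (hlex : LexLt z (lab b i) z' (lab b' j)) :
    PairS (2 * m + 1) 1 ((a : ℤ) - 1) m b b' i j z z' ↔ RT m a 1 (lab b i) (lab b' j) z z' := by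
  rw [pair_tgtM m a ham b b' i j hij z z' hz hz' hlex]
  unfold RT
  simp

theorem mainB (n m a : ℕ) (hn : 2 ≤ n) (ha : 1 ≤ a) (ham : a < m) :
    N_B n (2 * (m + n) + 1) 0 a = N_B n (2 * m + 1) 1 ((a : ℤ) - 1) := by
  refine count_aux (P := fun x => Avoids x 0 a) (P' := fun x => Avoids x 1 ((a : ℤ) - 1))
    (Q := fun L z => z ≠ 0 ∧ (L < 0 → a < z))
    (Q' := fun L z => L < 0 → a ≤ z)
    (R := RS ((m + n : ℕ) : ℤ) a)
    (encodeZ _ _ _) (encodeZ _ _ _)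
    (fun b i z => admZ_iff _ b i z) (sB n (m + n) a (by omega))
    (pair_src (m + n) a (by omega))
    (fun b i z => admZ_iff _ b i z) (tB n m a ham) (pair_tgtZ' m a ham) (d := 1) ?_
  intro L z w h1 h2 h3
  have := coreB hn m a (by exact_mod_cast ha) L z w h1 h2 h3
  exact_mod_cast this

theorem mainBC (n m a : ℕ) (hn : 2 ≤ n) (ha : 1 ≤ a) (hev : Even a) (ham : a < m) :
    N_BC n (2 * (m + n) + 1) 0 a = N_BC n (2 * m + 1) 1 ((a : ℤ) - 1) := by
  refine count_aux (P := fun x => Avoids x 0 a ∧ Avoids (2 * x) 0 a)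
    (P' := fun x => Avoids x 1 ((a : ℤ) - 1) ∧ Avoids (2 * x) 1 ((a : ℤ) - 1))
    (Q := fun L z => z ≠ 0 ∧ (L < 0 → a < z) ∧ (0 < L → a < 2 * ((m + n : ℕ) : ℤ) + 1 - 2 * z))
    (Q' := fun L z => (L < 0 → a ≤ z) ∧ (0 < L → a ≤ 2 * m + 1 - 2 * z))
    (R := RS ((m + n : ℕ) : ℤ) a)
    (encodeZ _ _ _) (encodeZ _ _ _)
    (fun b i z => admZ_iff _ b i z) (sBC n (m + n) a (by omega))
    (pair_src (m + n) a (by omega))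
    (fun b i z => admZ_iff _ b i z) (tBC n m a ham) (pair_tgtZ' m a ham) (d := 1) ?_
  intro L z w h1 h2 h3
  have := coreBC hn m a (by exact_mod_cast ha) (by exact_mod_cast hev) L z w h1 h2 h3
  exact_mod_cast this

theorem mainC (n m a : ℕ) (hn : 2 ≤ n) (ha : 1 ≤ a) (ham : a < m) :
    N_C n (2 * (m + n) + 1) 0 a = N_C n (2 * m + 1) 1 ((a : ℤ) - 1) := by
  refine count_aux (P := fun x => Avoids (2 * x) 0 a)
    (P' := fun x => Avoids (2 * x) 1 ((a : ℤ) - 1))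
    (Q := fun L z => z ≠ 0 ∧ (L < 0 → a < 2 * z) ∧ (0 < L → a < 2 * ((m + n : ℕ) : ℤ) + 1 - 2 * z))
    (Q' := fun L z => (L < 0 → a ≤ 2 * z + 1) ∧ (0 < L → a ≤ 2 * m - 2 * z))
    (R := RS ((m + n : ℕ) : ℤ) a)
    (encodeZ _ _ _) (encodeM _ _ _)
    (fun b i z => admZ_iff _ b i z) (sC n (m + n) a (by omega))
    (pair_src (m + n) a (by omega))
    (fun b i z => admM_iff _ b i z) (tC n m a ham) (pair_tgtM' m a ham) (d := 1) ?_
  intro L z w h1 h2 h3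
  have := coreC hn m a (by exact_mod_cast ha) L z w h1 h2 h3
  exact_mod_cast this

theorem nd_eq (n q : ℕ) (u v : ℤ) : N_D n q u v = (XS n q u v (fun _ => True)).ncard := by
  unfold N_D XS PairC
  simp

theorem mainD (n m a : ℕ) (hn : 2 ≤ n) (ha : 1 ≤ a) (ham : a < m) :
    N_D n (2 * (m + (n - 1)) + 1) 0 a = N_D n (2 * m + 1) 1 ((a : ℤ) - 1) := by
  rw [nd_eq, nd_eq]
  refine count_aux (Q := fun _ _ => True) (Q' := fun _ _ => True)
    (R := RS ((m + (n - 1) : ℕ) : ℤ) a)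
    (encodeZ _ _ _) (encodeZ _ _ _)
    (fun b i z => admZ_iff _ b i z) (fun _ _ _ _ => Iff.rfl)
    (pair_src (m + (n - 1)) a (by omega))
    (fun b i z => admZ_iff _ b i z) (fun _ _ _ _ => Iff.rfl) (pair_tgtZ' m a ham) (d := 0) ?_
  intro L z w h1 h2 h3
  have := coreD hn m a (by exact_mod_cast ha) L z w h1 h2 h3
  have hc : ((m + (n - 1) : ℕ) : ℤ) = m + n - 1 := by omega
  rw [hc]
  exact this

/-- Proposition 4.6. For large odd `q`:
`N_B(n,q,0,a) = N_B(n,q-2n,1,a-1)`; `N_D(n,q,0,a) = N_D(n,q-(2n-2),1,a-1)`;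
and for even `a`, the same shift by `2n` for `N_C` and `N_BC`. -/
theorem statement10 (n : ℕ) (hn : 2 ≤ n) (a : ℕ) (ha : 1 ≤ a) :
    ∃ N : ℕ, ∀ q : ℕ, Odd q → N < q →
      (N_B n q 0 (a : ℤ) = N_B n (q - 2 * n) 1 ((a : ℤ) - 1)) ∧
      (N_D n q 0 (a : ℤ) = N_D n (q - (2 * n - 2)) 1 ((a : ℤ) - 1)) ∧
      (Even a → N_C n q 0 (a : ℤ) = N_C n (q - 2 * n) 1 ((a : ℤ) - 1)) ∧
      (Even a → N_BC n q 0 (a : ℤ) = N_BC n (q - 2 * n) 1 ((a : ℤ) - 1)) := by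
  refine ⟨2 * a + 2 * n + 2, ?_⟩
  rintro q ⟨m, rfl⟩ hq
  obtain ⟨m', rfl⟩ : ∃ m', m = m' + n := ⟨m - n, by omega⟩
  have ham : a < m' := by omega
  have e1 : 2 * (m' + n) + 1 - 2 * n = 2 * m' + 1 := by omega
  have e2 : 2 * (m' + n) + 1 - (2 * n - 2) = 2 * (m' + 1) + 1 := by omega
  rw [e1, e2]
  refine ⟨mainB n m' a hn ha ham, ?_, fun _ => mainC n m' a hn ha ham,
    fun hev => mainBC n m' a hn ha hev ham⟩
  have := mainD n (m' + 1) a hn ha (by omega)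
  have e3 : m' + 1 + (n - 1) = m' + n := by omega
  rwa [e3] at this
end

section
/- Let n \ge 2 be an integer and let a \ge 1 be an odd integer. Then: (i) there exists an integer N such that for every odd integer q > N, N_C(n,q,0,a) = N_C(n,q-2n,1,a-1); (ii) if P and Q are polynomials in \mathbb{Q}[X] such that P(q) = N_{BC}(n,q,0,a) for all sufficiently large odd integers q and Q(q) = N_{BC}(n,q,1,a-1) for all sufficiently large odd integers q, then P(X) = Q(X - (2n+1)) as polynomials. -/
open Polynomial

lemma avoids_iff {q : ℕ} (u v z : ℤ) (hu : 0 ≤ u) (hv : v < q) (h1 : -(q:ℤ) ≤ z) (h2 : z ≤ q) :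
    Avoids (z : ZMod q) u v ↔ ¬ (u ≤ z ∧ z ≤ v) ∧ ¬ (u ≤ z + q ∧ z + q ≤ v) ∧
      ¬ (u ≤ z - q ∧ z - q ≤ v) := by
  constructor
  · intro h
    refine ⟨fun h' => h z h'.1 h'.2 rfl, fun h' => h (z+q) h'.1 h'.2 (by simp),
      fun h' => h (z-q) h'.1 h'.2 (by simp)⟩
  · rintro ⟨h3, h4, h5⟩ k hk1 hk2 hk
    rw [ZMod.intCast_eq_intCast_iff_dvd_sub] at hk
    obtain ⟨t, ht⟩ := hk
    have t1 : t < 2 := by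
      by_contra hc
      have : (q:ℤ) * 2 ≤ q * t := by gcongr; omega
      omega
    have t2 : -2 < t := by
      by_contra hc
      have : (q:ℤ) * t ≤ q * (-2) := by gcongr; omega
      omega
    have : t = -1 ∨ t = 0 ∨ t = 1 := by omega
    rcases this with rfl | rfl | rfl
    · have : k = z - q := by omega
      subst this; tauto
    · have : k = z := by omega
      subst this; tauto
    · have : k = z + q := by omega
      subst this; tauto

def ltr {n : ℕ} (i : Fin n) (b : Bool) : ℤ := if b then (n:ℤ) - i else (i:ℤ) - n

def wd {n : ℕ} (σ : Equiv.Perm (Fin n)) (b : Fin n → Bool) (k : Fin n) : ℤ := ltr (σ k) (b (σ k))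

/-- signed value -/
def sg {n : ℕ} (b : Fin n → Bool) (r : Fin n → ℤ) (i : Fin n) : ℤ := if b i then - r i else r i

def Valid (bc : Prop) (n q : ℕ) (u v : ℤ) (x : Fin n → ZMod q) : Prop :=
    (∀ i, (bc → Avoids (x i) u v) ∧ Avoids (2 * x i) u v) ∧
    ∀ i j : Fin n, i < j → Avoids (x i - x j) u v ∧ Avoids (x i + x j) u v

/-- gap conditions -/
def Good (bc : Prop) (m : ℕ) (q a c : ℤ) (w : Fin (m+1) → ℤ) (p : Fin (m+1) → ℤ) : Prop :=
  ((bc → c ≤ p 0 ∧ (w 0 < 0 → c + a ≤ p 0)) ∧ (c ≤ 2 * p 0 ∧ (w 0 < 0 → c + a ≤ 2 * p 0))) ∧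
  (∀ k : Fin m, p k.castSucc + c ≤ p k.succ ∧
    (w k.succ < w k.castSucc → p k.castSucc + c + a ≤ p k.succ)) ∧
  (2 * p (Fin.last m) + c ≤ q ∧ (0 < w (Fin.last m) → 2 * p (Fin.last m) + c + a ≤ q))

lemma ltr_ne {n : ℕ} (i : Fin n) (b : Bool) : ltr i b ≠ 0 := by
  have := i.2
  unfold ltr; split <;> omega

lemma ltr_inj {n : ℕ} {i j : Fin n} {b c : Bool} (h : ltr i b = ltr j c) : i = j := by
  have := i.2
  have := j.2
  unfold ltr at h; ext; revert h; split <;> split <;> omega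

lemma ltr_neg {n : ℕ} {i j : Fin n} {b c : Bool} (h : ltr i b = - ltr j c) : i = j := by
  have := i.2
  have := j.2
  unfold ltr at h; ext; revert h; split <;> split <;> omega

lemma chain_s11 (m : ℕ) (a c : ℤ) (hc : 0 ≤ c) (ha : 0 ≤ a) (w p : Fin (m+1) → ℤ)
    (h : ∀ k : Fin m, p k.castSucc + c ≤ p k.succ ∧
    (w k.succ < w k.castSucc → p k.castSucc + c + a ≤ p k.succ)) (i j : Fin (m+1)) (hij : i < j) :
    p i + c ≤ p j ∧ (w j < w i → p i + c + a ≤ p j) := by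
  induction j using Fin.induction with
  | zero => exact absurd hij (by simp)
  | succ j ih =>
    have h' := h j
    rcases lt_or_eq_of_le (Fin.le_castSucc_iff.2 hij) with h1 | h1
    · have := ih h1
      constructor
      · omega
      · intro h2
        by_cases h3 : w j.castSucc < w i
        · have := this.2 h3; omega
        · have := h'.2 (by omega); omega
    · subst h1; exact h'

section
variable {bc : Prop} {m : ℕ} {q a c : ℤ} (hc : 0 ≤ c) (ha : 0 ≤ a) {w p : Fin (m+1) → ℤ}
  (hw : ∀ k, w k ≠ 0)
  (h : Good bc m q a c w p)
include hc ha hw h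

lemma chain_le (i j : Fin (m+1)) (hij : i ≤ j) :
    p i ≤ p j ∧ (w j < w i → p i + c + a ≤ p j) := by
  rcases lt_or_eq_of_le hij with h1 | h1
  · have := chain_s11 m a c hc ha w p h.2.1 i j h1
    exact ⟨by omega, this.2⟩
  · subst h1; simp

lemma chain_low (k l : Fin (m+1)) (hkl : k ≤ l) :
    c ≤ p k + p l ∧ (w l < - w k → c + a ≤ p k + p l) := by
  have h0 := h.1.2
  have h1 := chain_le hc ha hw h 0 k (Fin.zero_le _)
  have h2 := chain_le hc ha hw h 0 l (Fin.zero_le _)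
  have := hw 0
  have := hw k
  have := hw l
  refine ⟨by omega, fun h3 => ?_⟩
  by_cases w 0 < 0 <;> by_cases w l < w 0 <;> by_cases w k < w 0 <;> simp_all <;> omega

lemma chain_high (k l : Fin (m+1)) (hkl : k ≤ l) :
    p k + p l + c ≤ q ∧ (- w k < w l → p k + p l + c + a ≤ q) := by
  have h0 := h.2.2
  have h1 := chain_le hc ha hw h k (Fin.last m) (Fin.le_last _)
  have h2 := chain_le hc ha hw h l (Fin.last m) (Fin.le_last _)
  have := hw (Fin.last m)
  have := hw k
  have := hw l
  refine ⟨by omega, fun h3 => ?_⟩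
  by_cases 0 < w (Fin.last m) <;> by_cases w (Fin.last m) < w l <;>
    by_cases w (Fin.last m) < w k <;> simp_all <;> omega

lemma chain_bc (hbc : bc) (k : Fin (m+1)) : c ≤ p k ∧ (w k < 0 → c + a ≤ p k) := by
  have h0 := h.1.1 hbc
  have h1 := chain_le hc ha hw h 0 k (Fin.zero_le _)
  have := hw 0
  have := hw k
  refine ⟨by omega, fun h3 => ?_⟩
  by_cases w 0 < 0 <;> by_cases w k < w 0 <;> simp_all <;> omega

end

/-- all facts about a pair of indices -/
lemma pair_facts {bc : Prop} {m : ℕ} {q a c : ℤ} (hc : 0 ≤ c) (ha : 0 ≤ a)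
    (σ : Equiv.Perm (Fin (m+1))) (b : Fin (m+1) → Bool) (r : Fin (m+1) → ℤ)
    (h : Good bc m q a c (wd σ b) (r ∘ σ)) (i j : Fin (m+1)) (hij : i ≠ j) :
    ((r i + c ≤ r j ∧ (ltr j (b j) < ltr i (b i) → r i + c + a ≤ r j)) ∨
     (r j + c ≤ r i ∧ (ltr i (b i) < ltr j (b j) → r j + c + a ≤ r i))) ∧
    (c ≤ r i + r j ∧ (ltr j (b j) < - ltr i (b i) → c + a ≤ r i + r j)) ∧
    (r i + r j + c ≤ q ∧ (- ltr i (b i) < ltr j (b j) → r i + r j + c + a ≤ q)) := by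
  have hw : ∀ k, wd σ b k ≠ 0 := fun k => ltr_ne _ _
  have key : ∀ k, (r ∘ σ) (σ.symm k) = r k ∧ wd σ b (σ.symm k) = ltr k (b k) := by
    intro k; simp [wd]
  obtain ⟨ki1, ki2⟩ := key i
  obtain ⟨kj1, kj2⟩ := key j
  rcases lt_trichotomy (σ.symm i) (σ.symm j) with h1 | h1 | h1
  · have A := chain_s11 m a c hc ha _ _ h.2.1 _ _ h1
    have B := chain_low hc ha hw h _ _ h1.le
    have C := chain_high hc ha hw h _ _ h1.le
    rw [ki1, ki2, kj1, kj2] at A B C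
    exact ⟨Or.inl A, B, C⟩
  · exact absurd (σ.symm.injective h1) hij
  · have A := chain_s11 m a c hc ha _ _ h.2.1 _ _ h1
    have B := chain_low hc ha hw h _ _ h1.le
    have C := chain_high hc ha hw h _ _ h1.le
    rw [ki1, ki2, kj1, kj2] at A B C
    refine ⟨Or.inr A, ⟨by omega, fun h => ?_⟩, ⟨by omega, fun h => ?_⟩⟩
    · have := B.2 (by omega); omega
    · have := C.2 (by omega); omega

lemma single_facts {bc : Prop} {m : ℕ} {q a c : ℤ} (hc : 0 ≤ c) (ha : 0 ≤ a)
    (σ : Equiv.Perm (Fin (m+1))) (b : Fin (m+1) → Bool) (r : Fin (m+1) → ℤ)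
    (h : Good bc m q a c (wd σ b) (r ∘ σ)) (i : Fin (m+1)) :
    (bc → c ≤ r i ∧ (b i = false → c + a ≤ r i)) ∧
    (c ≤ 2 * r i ∧ (b i = false → c + a ≤ 2 * r i)) ∧
    (2 * r i + c ≤ q ∧ (b i = true → 2 * r i + c + a ≤ q)) := by
  have hw : ∀ k, wd σ b k ≠ 0 := fun k => ltr_ne _ _
  have ki1 : (r ∘ σ) (σ.symm i) = r i := by simp
  have ki2 : wd σ b (σ.symm i) = ltr i (b i) := by simp [wd]
  have B := chain_low hc ha hw h (σ.symm i) _ le_rfl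
  have C := chain_high hc ha hw h (σ.symm i) _ le_rfl
  have D := fun hb => chain_bc hc ha hw h hb (σ.symm i)
  rw [ki1, ki2] at B C D
  have := i.2
  unfold ltr at B C D
  cases hb : b i
  · simp only [hb, Bool.false_eq_true, if_false] at B C D
    refine ⟨fun h => ⟨(D h).1, fun _ => (D h).2 (by omega)⟩, ⟨by omega, fun _ => ?_⟩, by omega, by simp⟩
    have := B.2 (by omega); omega
  · simp only [hb, if_true] at B C D
    refine ⟨fun h => ⟨(D h).1, by simp⟩, ⟨by omega, by simp⟩, by omega, fun _ => ?_⟩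
    have := C.2 (by omega); omega

lemma valid_iff (bc : Prop) (n q : ℕ) (a c : ℤ) (hc : c = 0 ∨ c = 1) (ha : 1 ≤ a) (hq : 2 * a + 4 < q)
    (X : Fin n → ℤ) (hX : ∀ i, - (q:ℤ) ≤ 2 * X i ∧ 2 * X i ≤ q) :
    Valid bc n q (1 - c) (a - 1 + c) (fun i => (X i : ZMod q)) ↔
    (∀ i, (bc → ¬ (1 - c ≤ X i ∧ X i ≤ a - 1 + c)) ∧
      ¬ (1 - c ≤ 2 * X i ∧ 2 * X i ≤ a - 1 + c) ∧ ¬ (1 - c ≤ 2 * X i + q ∧ 2 * X i + q ≤ a - 1 + c) ∧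
      ¬ (1 - c ≤ 2 * X i - q)) ∧
    (∀ i j : Fin n, i < j → 
      (¬ (1 - c ≤ X i - X j ∧ X i - X j ≤ a - 1 + c) ∧
        ¬ (1 - c ≤ X i - X j + q ∧ X i - X j + q ≤ a - 1 + c) ∧ ¬ (1 - c ≤ X i - X j - q)) ∧ 
      (¬ (1 - c ≤ X i + X j ∧ X i + X j ≤ a - 1 + c) ∧
        ¬ (1 - c ≤ X i + X j + q ∧ X i + X j + q ≤ a - 1 + c) ∧ ¬ (1 - c ≤ X i + X j - q))) := by
  have av := fun z h1 h2 => @avoids_iff q (1-c) (a-1+c) z (by omega) (by omega) h1 h2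
  unfold Valid
  refine and_congr (forall_congr' fun i => ?_) (forall_congr' fun i => forall_congr' fun j => 
    imp_congr_right fun _ => ?_)
  · have := hX i
    have e : (2 * (X i : ZMod q)) = ((2 * X i : ℤ) : ZMod q) := by push_cast; rfl
    simp only [e]
    rw [av _ (by omega) (by omega), av _ (by omega) (by omega)]
    refine and_congr (imp_congr_right fun _ => ?_) ?_ <;> omega
  · have := hX i
    have := hX j
    simp only [← Int.cast_sub, ← Int.cast_add]
    rw [av _ (by omega) (by omega), av _ (by omega) (by omega)]
    omega

lemma good_range {bc : Prop} {m q : ℕ} {a c : ℤ} (hc : 0 ≤ c) (ha : 1 ≤ a)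
    (σ : Equiv.Perm (Fin (m+1))) (b : Fin (m+1) → Bool) (r : Fin (m+1) → ℤ)
    (h : Good bc m q a c (wd σ b) (r ∘ σ)) (i : Fin (m+1)) :
    -(q:ℤ) < 2 * sg b r i ∧ 2 * sg b r i ≤ q ∧ r i = |sg b r i| ∧ (b i = true ↔ sg b r i ≤ 0) := by
  have := single_facts hc (by omega) σ b r h i
  unfold sg
  cases hb : b i <;> simp [hb] at this ⊢
  · rw [abs_of_nonneg (by omega)]; omega
  · rw [abs_of_nonneg (by omega)]; omega

lemma good_valid {bc : Prop} {m q : ℕ} {a c : ℤ} (hc : c = 0 ∨ c = 1) (ha : 1 ≤ a) (hq : 2 * a + 4 < q)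
    (σ : Equiv.Perm (Fin (m+1))) (b : Fin (m+1) → Bool) (r : Fin (m+1) → ℤ)
    (h : Good bc m q a c (wd σ b) (r ∘ σ)) :
    Valid bc (m+1) q (1 - c) (a - 1 + c) (fun i => ((sg b r i : ℤ) : ZMod q)) := by
  have hr := fun i => good_range (by omega) ha σ b r h i
  rw [valid_iff bc _ q a c hc ha hq _ (fun i => ⟨(hr i).1.le, (hr i).2.1⟩)]
  constructor
  · intro i
    have := single_facts (by omega) (by omega) σ b r h i
    unfold sg
    cases hb : b i <;> simp only [hb, if_true, Bool.false_eq_true, if_false, true_imp_iff, false_imp_iff, forall_const, and_true, Bool.true_eq_false] at this ⊢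
    · refine ⟨fun hbc => ?_, ?_⟩
      · have := this.1 hbc; omega
      · omega
    · refine ⟨fun hbc => ?_, ?_⟩
      · have := this.1 hbc; omega
      · omega
  · intro i j hij
    have P := pair_facts (by omega) (by omega) σ b r h i j hij.ne
    have := single_facts (by omega) (by omega) σ b r h i
    have := single_facts (by omega) (by omega) σ b r h j
    have := i.2
    have := j.2
    have : (i:ℕ) < j := hij
    unfold sg
    unfold ltr at P
    cases hb : b i <;> cases hb' : b j <;> simp only [hb, hb', if_true, Bool.false_eq_true, if_false] at P ⊢ <;> omega

lemma valid_good {bc : Prop} {m q : ℕ} [NeZero q] {a c : ℤ} (hc : c = 0 ∨ c = 1) (ha : 1 ≤ a) (hq : 2 * a + 4 < q)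
    (x : Fin (m+1) → ZMod q) (hx : Valid bc (m+1) q (1 - c) (a - 1 + c) x) :
    ∃ σ b r, Good bc m q a c (wd σ b) (r ∘ σ) ∧ (fun i => ((sg b r i : ℤ) : ZMod q)) = x := by
  let Y : Fin (m+1) → ℤ := fun i => (x i).valMinAbs
  let b : Fin (m+1) → Bool := fun i => decide (Y i ≤ 0)
  let r : Fin (m+1) → ℤ := fun i => |Y i|
  have hX : ∀ i, -(q:ℤ) < 2 * (Y i) ∧ 2 * (Y i) ≤ q := by
    intro i
    have := (x i).valMinAbs_mem_Ioc
    simp only [Set.mem_Ioc] at this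
    simp only [Y]; omega
  have hsg : sg b r = Y := by
    funext i
    by_cases h : Y i ≤ 0
    · simp [sg, b, r, h, abs_of_nonpos h]
    · simp [sg, b, r, h, abs_of_pos (not_le.1 h)]
  have hxX : (fun i => ((Y i : ℤ) : ZMod q)) = x := by
    funext i; simp [Y]
  rw [← hxX, valid_iff bc _ q a c hc ha hq Y (fun i => ⟨(hX i).1.le, (hX i).2⟩)] at hx
  let f : Fin (m+1) → ℤ ×ₗ ℤ := fun i => toLex (r i, ltr i (b i))
  have hmono := Tuple.monotone_sort f
  refine ⟨Tuple.sort f, b, r, ?_, by rw [hsg, hxX]⟩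
  generalize Tuple.sort f = σ at hmono
  have hrX : ∀ i, (b i = true ∧ Y i ≤ 0 ∧ r i = - Y i) ∨ (b i = false ∧ 0 < Y i ∧ r i = Y i) := by
    intro i
    by_cases h : Y i ≤ 0
    · left; simp [b, r, h, abs_of_nonpos h]
    · right; simp [b, r, h, abs_of_pos (not_le.1 h)]; omega
  clear_value Y b r
  refine ⟨?_, ?_, ?_⟩
  · have h1 := hx.1 (σ 0)
    have h2 := (σ 0).2
    have h3 := hX (σ 0)
    simp only [wd, ltr, Function.comp]
    rcases hrX (σ 0) with ⟨hb, hx0, hr⟩ | ⟨hb, hx0, hr⟩ <;> simp only [hb, hr, if_true, Bool.false_eq_true, if_false]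
    · refine ⟨fun hbc => ?_, ?_⟩
      · have := h1.1 hbc; omega
      · omega
    · refine ⟨fun hbc => ?_, ?_⟩
      · have := h1.1 hbc; omega
      · omega
  · intro k
    have hm := hmono (Fin.castSucc_lt_succ (i := k)).le
    have hne : σ k.castSucc ≠ σ k.succ := fun h => (Fin.castSucc_lt_succ (i := k)).ne (σ.injective h)
    simp only [f, Function.comp, Prod.Lex.toLex_le_toLex] at hm
    simp only [wd, Function.comp]
    generalize σ k.castSucc = i at *
    generalize σ k.succ = j at *
    have hX1 := hX i
    have hX2 := hX j
    have h2 := i.2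
    have h3 := j.2
    unfold ltr at *
    rcases lt_or_gt_of_ne hne with hij | hij
    · have h1 := hx.2 _ _ hij
      have : (i:ℕ) < j := hij
      rcases hrX i with ⟨hb, hx0, hr⟩ | ⟨hb, hx0, hr⟩ <;>
      rcases hrX j with ⟨hb', hx0', hr'⟩ | ⟨hb', hx0', hr'⟩ <;>
        simp only [hb, hr, hb', hr', if_true, Bool.false_eq_true, if_false] at hm ⊢ <;> omega
    · have h1 := hx.2 _ _ hij
      have : (j:ℕ) < i := hij
      rcases hrX i with ⟨hb, hx0, hr⟩ | ⟨hb, hx0, hr⟩ <;>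
      rcases hrX j with ⟨hb', hx0', hr'⟩ | ⟨hb', hx0', hr'⟩ <;>
        simp only [hb, hr, hb', hr', if_true, Bool.false_eq_true, if_false] at hm ⊢ <;> omega
  · have h1 := hx.1 (σ (Fin.last m))
    have h2 := (σ (Fin.last m)).2
    have h3 := hX (σ (Fin.last m))
    simp only [wd, ltr, Function.comp]
    rcases hrX (σ (Fin.last m)) with ⟨hb, hx0, hr⟩ | ⟨hb, hx0, hr⟩ <;> simp only [hb, hr, if_true, Bool.false_eq_true, if_false]
    · omega
    · omega

lemma good_inj {bc : Prop} {m q : ℕ} {a c : ℤ} (hc : 0 ≤ c) (ha : 1 ≤ a)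
    (σ σ' : Equiv.Perm (Fin (m+1))) (b b' : Fin (m+1) → Bool) (r r' : Fin (m+1) → ℤ)
    (h : Good bc m q a c (wd σ b) (r ∘ σ)) (h' : Good bc m q a c (wd σ' b') (r' ∘ σ'))
    (he : (fun i => ((sg b r i : ℤ) : ZMod q)) = (fun i => ((sg b' r' i : ℤ) : ZMod q))) :
    σ = σ' ∧ b = b' ∧ r = r' := by
  have hs : sg b r = sg b' r' := by
    funext i
    have h1 := good_range hc ha σ b r h i
    have h2 := good_range hc ha σ' b' r' h' i
    have h3 := congrFun he i
    simp only [ZMod.intCast_eq_intCast_iff_dvd_sub] at h3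
    have := Int.eq_zero_of_abs_lt_dvd h3 (by rw [abs_lt]; omega)
    omega
  have hr : r = r' := by
    funext i
    rw [(good_range hc ha σ b r h i).2.2.1, (good_range hc ha σ' b' r' h' i).2.2.1, hs]
  have hb : b = b' := by
    funext i
    rw [Bool.eq_iff_iff, (good_range hc ha σ b r h i).2.2.2, (good_range hc ha σ' b' r' h' i).2.2.2, hs]
  subst hr hb
  refine ⟨?_, rfl, rfl⟩
  let f : Fin (m+1) → ℤ ×ₗ ℤ := fun i => toLex (r i, ltr i (b i))
  have key : ∀ τ : Equiv.Perm (Fin (m+1)), Good bc m q a c (wd τ b) (r ∘ τ) → Monotone (f ∘ τ) := by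
    intro τ hτ k l hkl
    have := chain_le hc (by omega) (fun k => ltr_ne _ _) hτ k l hkl
    simp only [f, Function.comp, Prod.Lex.toLex_le_toLex]
    simp only [Function.comp, wd] at this
    omega
  have := Tuple.unique_monotone (key σ h) (key σ' h')
  ext k
  have hk := congrFun this k
  simp only [f, Function.comp, toLex_inj, Prod.mk.injEq] at hk
  rw [ltr_inj hk.2]

theorem count_sum (bc : Prop) (m q : ℕ) (a c : ℤ) (hc : c = 0 ∨ c = 1) (ha : 1 ≤ a) (hq : 2 * a + 4 < q) :
    Set.ncard {x | Valid bc (m+1) q (1 - c) (a - 1 + c) x} =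
      ∑ t : Equiv.Perm (Fin (m+1)) × (Fin (m+1) → Bool),
        Set.ncard {p | Good bc m q a c (wd t.1 t.2) p} := by
  haveI : NeZero q := ⟨by omega⟩
  let Φ : (Σ t : Equiv.Perm (Fin (m+1)) × (Fin (m+1) → Bool),
      {p | Good bc m q a c (wd t.1 t.2) p}) → {x | Valid bc (m+1) q (1 - c) (a - 1 + c) x} :=
    fun z => ⟨fun i => ((sg z.1.2 (z.2.1 ∘ z.1.1.symm) i : ℤ) : ZMod q), 
      good_valid hc ha hq z.1.1 z.1.2 _ (by
        have : (z.2.1 ∘ z.1.1.symm) ∘ z.1.1 = z.2.1 := by ext; simp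
        rw [this]; exact z.2.2)⟩
  have hinj : Function.Injective Φ := by
    rintro ⟨⟨σ, b⟩, p, hp⟩ ⟨⟨σ', b'⟩, p', hp'⟩ he
    change Good _ _ _ _ _ _ _ at hp hp'
    have e1 : (p ∘ σ.symm) ∘ σ = p := by ext; simp
    have e2 : (p' ∘ σ'.symm) ∘ σ' = p' := by ext; simp
    obtain ⟨rfl, rfl, h3⟩ := good_inj (q := q) (c := c) (by omega) ha σ σ' b b' (p ∘ σ.symm) (p' ∘ σ'.symm) 
      (by rw [e1]; exact hp) (by rw [e2]; exact hp') (congrArg Subtype.val he)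
    have : p = p' := by rw [← e1, ← e2, h3]
    subst this
    rfl
  have hsurj : Function.Surjective Φ := by
    rintro ⟨x, hx⟩
    obtain ⟨σ, b, r, hg, hr⟩ := valid_good hc ha hq x hx
    refine ⟨⟨(σ, b), r ∘ σ, hg⟩, ?_⟩
    apply Subtype.ext
    simp only [Φ]
    rw [← hr]
    have : (r ∘ σ) ∘ σ.symm = r := by ext; simp
    rw [this]
  have hfin : ∀ t : Equiv.Perm (Fin (m+1)) × (Fin (m+1) → Bool), 
      Finite {p | Good bc m q a c (wd t.1 t.2) p} := by
    intro t
    exact Finite.of_injective (fun p => Φ ⟨t, p⟩) (fun p p' h => by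
      have := hinj h
      simpa using this)
  have := Nat.card_congr (Equiv.ofBijective Φ ⟨hinj, hsurj⟩)
  rw [Nat.card_sigma] at this
  exact this.symm

/-! counting the gap vectors -/

lemma ncard_mono (n : ℕ) : ∀ (l : ℤ) (N : ℕ),
    Finite {t : Fin n → ℤ | Monotone t ∧ ∀ k, l ≤ t k ∧ t k ≤ l + N} ∧
    Set.ncard {t : Fin n → ℤ | Monotone t ∧ ∀ k, l ≤ t k ∧ t k ≤ l + N} = (N + n).choose n := by
  induction n with
  | zero =>
    intro l N
    have : {t : Fin 0 → ℤ | Monotone t ∧ ∀ k, l ≤ t k ∧ t k ≤ l + N} = {Fin.elim0} := by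
      ext t
      constructor
      · intro _; exact Subsingleton.elim _ _
      · intro _; exact ⟨fun i => i.elim0, fun i => i.elim0⟩
    rw [this]
    simp only [Set.ncard_singleton]
    exact ⟨inferInstance, by simp⟩
  | succ n ih =>
    intro l N
    let A : ℕ → Set (Fin n → ℤ) := fun j =>
      {t | Monotone t ∧ ∀ k, l + N - j ≤ t k ∧ t k ≤ (l + N - j) + j}
    have hA := fun j : ℕ => ih (l + N - j) j
    let Φ : (Σ j : Fin (N+1), A j) → {t : Fin (n+1) → ℤ | Monotone t ∧ ∀ k, l ≤ t k ∧ t k ≤ l + N} :=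
      fun z => ⟨Fin.cons (l + N - (z.1 : ℕ)) z.2.1, by
        obtain ⟨j, t, ht1, ht2⟩ := z
        have := j.2
        constructor
        · rw [Fin.monotone_iff_le_succ]
          intro i
          cases n with
          | zero => exact i.elim0
          | succ n =>
            refine Fin.cases ?_ (fun i => ?_) i
            · have := ht2 0
              simpa using this.1
            · rw [← Fin.succ_castSucc, Fin.cons_succ, Fin.cons_succ]
              exact ht1 (Fin.castSucc_lt_succ).le
        · intro k
          refine Fin.cases ?_ (fun i => ?_) k
          · rw [Fin.cons_zero]; dsimp; omega
          · have := ht2 i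
            rw [Fin.cons_succ]; dsimp; omega⟩
    have hinj : Function.Injective Φ := by
      rintro ⟨j, t, ht⟩ ⟨j', t', ht'⟩ he
      have he := congrArg Subtype.val he
      have h0 := congrFun he 0
      have hs : t = t' := by
        funext i
        simpa [Φ] using congrFun he i.succ
      simp only [Φ, Fin.cons_zero] at h0
      have : j = j' := by ext; omega
      subst this hs
      rfl
    have hsurj : Function.Surjective Φ := by
      rintro ⟨t, ht1, ht2⟩
      have h0 := ht2 0
      refine ⟨⟨⟨(l + N - t 0).toNat, by omega⟩, fun i => t i.succ, 
        fun i j hij => ht1 (Fin.succ_le_succ_iff.2 hij), fun k => ?_⟩, ?_⟩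
      · have := ht2 k.succ
        have := ht1 (Fin.zero_le k.succ)
        dsimp; omega
      · apply Subtype.ext
        funext k
        refine Fin.cases ?_ (fun i => ?_) k
        · simp only [Φ, Fin.cons_zero]; omega
        · simp only [Φ, Fin.cons_succ]
    haveI : ∀ j : Fin (N+1), Finite (A j) := fun j => (hA j).1
    have hcard := Nat.card_congr (Equiv.ofBijective Φ ⟨hinj, hsurj⟩)
    refine ⟨Finite.of_surjective Φ hsurj, ?_⟩
    rw [Nat.card_sigma] at hcard
    have e : ∀ j : Fin (N+1), Nat.card (A j) = ((j:ℕ) + n).choose n := fun j => (hA j).2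
    rw [Finset.sum_congr rfl (fun j _ => e j), Fin.sum_univ_eq_sum_range (fun j => (j + n).choose n),
      Nat.sum_range_add_choose] at hcard
    exact hcard.symm

def dsc {m : ℕ} (w : Fin (m+1) → ℤ) (k : Fin m) : ℤ := if w k.succ < w k.castSucc then 1 else 0
def e0 {m : ℕ} (w : Fin (m+1) → ℤ) : ℤ := if w 0 < 0 then 1 else 0
def e1 {m : ℕ} (w : Fin (m+1) → ℤ) : ℤ := if 0 < w (Fin.last m) then 1 else 0
def DD {m : ℕ} (w : Fin (m+1) → ℤ) : ℤ := ∑ k, dsc w k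

lemma good_count (bc : Prop) (m : ℕ) (q a c : ℤ) (w : Fin (m+1) → ℤ) (c0 : ℤ) (ha : 0 ≤ a)
    (hc0 : (bc ∧ 0 ≤ c ∧ c0 = c + a * e0 w) ∨ (¬ bc ∧ c0 = (c + a * e0 w + 1) / 2)) (N : ℕ)
    (hN : (q - c - a * e1 w) / 2 - c0 - (m * c + a * DD w) = N) :
    Set.ncard {p | Good bc m q a c w p} = (N + (m+1)).choose (m+1) := by
  rw [← (ncard_mono (m+1) 0 N).2]
  let off : Fin (m+1) → ℤ := fun k => c0 + ∑ i : Fin m, if i.castSucc < k then c + a * dsc w i else 0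
  have off0 : off 0 = c0 := by simp [off]
  have offl : off (Fin.last m) = c0 + (m * c + a * DD w) := by
    simp [off, Fin.castSucc_lt_last, Finset.sum_add_distrib, DD, Finset.mul_sum]
  have offs : ∀ k : Fin m, off k.succ = off k.castSucc + (c + a * dsc w k) := by
    intro k
    have : (∑ i : Fin m, if i.castSucc < k.succ then c + a * dsc w i else 0) = 
      (∑ i : Fin m, ((if i.castSucc < k.castSucc then c + a * dsc w i else 0) + 
        (if i = k then c + a * dsc w k else 0))) := by
      refine Finset.sum_congr rfl fun i _ => ?_
      simp only [Fin.castSucc_lt_succ_iff, Fin.castSucc_lt_castSucc_iff]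
      rcases lt_trichotomy i k with h | h | h
      · simp [h, h.le, h.ne]
      · simp [h]
      · simp [h.not_ge, h.not_gt, h.ne']
    simp only [off, this, Finset.sum_add_distrib]
    simp
    ring
  clear_value off
  refine Set.ncard_congr (fun p _ k => p k - off k) ?_ ?_ ?_
  · rintro p ⟨h1, h2, h3⟩
    have hm : Monotone (fun k => p k - off k) := by
      rw [Fin.monotone_iff_le_succ]
      intro k
      have h2k := h2 k
      rw [offs k]
      unfold dsc
      split_ifs with h
      · have := h2k.2 h; omega
      · omega
    refine ⟨hm, fun k => ?_⟩
    have hlo := hm (Fin.zero_le k)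
    have hhi := hm (Fin.le_last k)
    dsimp at hlo hhi
    rw [off0] at hlo
    rw [offl] at hhi
    have hA : c0 ≤ p 0 := by
      rcases hc0 with ⟨hb, _, rfl⟩ | ⟨_, rfl⟩
      · have := h1.1 hb
        unfold e0; split_ifs with h
        · have := this.2 h; omega
        · omega
      · have := h1.2
        unfold e0; split_ifs with h
        · have := this.2 h; omega
        · omega
    have hB : p (Fin.last m) ≤ (q - c - a * e1 w) / 2 := by
      unfold e1; split_ifs with h
      · have := h3.2 h; omega
      · omega
    change 0 ≤ p k - off k ∧ p k - off k ≤ 0 + N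
    omega
  · intro p p' _ _ h
    funext k
    have := congrFun h k
    omega
  · rintro t ⟨ht, hb⟩
    refine ⟨fun k => t k + off k, ⟨?_, ?_, ?_⟩, by funext k; simp⟩
    · have := hb 0
      beta_reduce
      rw [off0]
      rcases hc0 with ⟨hb, _, rfl⟩ | ⟨hb, rfl⟩
      · unfold e0; split_ifs with h
        · refine ⟨fun _ => ⟨?_, fun _ => ?_⟩, ?_, fun _ => ?_⟩ <;> omega
        · refine ⟨fun _ => ⟨?_, fun _ => ?_⟩, ?_, fun _ => ?_⟩ <;> omega
      · refine ⟨fun h => absurd h hb, ?_⟩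
        unfold e0; split_ifs with h
        · refine ⟨?_, fun _ => ?_⟩ <;> omega
        · refine ⟨?_, fun _ => ?_⟩ <;> omega
    · intro k
      have := ht (Fin.castSucc_lt_succ (i := k)).le
      beta_reduce
      rw [offs k]
      unfold dsc
      split_ifs with h
      · refine ⟨?_, fun _ => ?_⟩ <;> omega
      · refine ⟨?_, fun _ => ?_⟩ <;> omega
    · have := hb (Fin.last m)
      beta_reduce
      rw [offl]
      unfold e1 at hN
      split_ifs at hN with h
      · refine ⟨?_, fun _ => ?_⟩ <;> omega
      · refine ⟨?_, fun _ => ?_⟩ <;> omega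

lemma e0_cases {m : ℕ} (w : Fin (m+1) → ℤ) : e0 w = 0 ∨ e0 w = 1 := by
  unfold e0; split_ifs <;> simp
lemma e1_cases {m : ℕ} (w : Fin (m+1) → ℤ) : e1 w = 0 ∨ e1 w = 1 := by
  unfold e1; split_ifs <;> simp
lemma DD_bounds {m : ℕ} (w : Fin (m+1) → ℤ) : 0 ≤ DD w ∧ DD w ≤ m := by
  constructor
  · exact Finset.sum_nonneg fun k _ => by unfold dsc; split_ifs <;> simp
  · calc DD w ≤ ∑ k : Fin m, 1 := Finset.sum_le_sum fun k _ => by unfold dsc; split_ifs <;> simp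
      _ = m := by simp

abbrev TT (m : ℕ) := Equiv.Perm (Fin (m+1)) × (Fin (m+1) → Bool)

def rv (m : ℕ) (t : TT m) : TT m := (Fin.revPerm.trans t.1, fun i => !(t.2 i))

lemma rv_rv (m : ℕ) (t : TT m) : rv m (rv m t) = t := by
  refine Prod.ext ?_ ?_
  · ext k; simp [rv]
  · funext i; simp [rv]

lemma wd_rv (m : ℕ) (t : TT m) (k : Fin (m+1)) :
    wd (rv m t).1 (rv m t).2 k = - wd t.1 t.2 k.rev := by
  simp only [wd, rv, ltr, Equiv.trans_apply, Fin.revPerm_apply]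
  cases t.2 (t.1 k.rev) <;> simp

lemma e0_rv (m : ℕ) (t : TT m) : e0 (wd (rv m t).1 (rv m t).2) = e1 (wd t.1 t.2) := by
  simp [e0, e1, wd_rv]
lemma e1_rv (m : ℕ) (t : TT m) : e1 (wd (rv m t).1 (rv m t).2) = e0 (wd t.1 t.2) := by
  simp [e0, e1, wd_rv]
lemma DD_rv (m : ℕ) (t : TT m) : DD (wd (rv m t).1 (rv m t).2) = DD (wd t.1 t.2) := by
  unfold DD
  rw [← Equiv.sum_comp Fin.revPerm]
  refine Finset.sum_congr rfl fun k _ => ?_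
  simp [dsc, wd_rv, Fin.rev_succ, Fin.rev_castSucc]

theorem part_one (m : ℕ) (a : ℕ) (ha : 1 ≤ a) (q : ℕ) (hodd : Odd q)
    (hq : 2 * (a * m) + 10 * a + 10 * m + 30 < q) :
    Set.ncard {x | Valid False (m+1) q 0 (a:ℤ) x} =
    Set.ncard {x | Valid False (m+1) (q - 2 * (m+1)) 1 ((a:ℤ) - 1) x} := by
  have h1 := count_sum False m q a 1 (Or.inr rfl) (by omega) (by omega)
  have h2 := count_sum False m (q - 2 * (m+1)) a 0 (Or.inl rfl) (by omega) (by omega)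
  simp only [sub_self, sub_add_cancel, sub_zero, add_zero] at h1 h2
  rw [h1, h2, ← Equiv.sum_comp (Function.Involutive.toPerm (rv m) (rv_rv m))]
  refine Finset.sum_congr rfl fun t _ => ?_
  change Set.ncard {p | Good False m q a 1 (wd (rv m t).1 (rv m t).2) p} = _
  have hD := DD_bounds (wd t.1 t.2)
  have b1 : 0 ≤ (a:ℤ) * DD (wd t.1 t.2) := mul_nonneg (by omega) hD.1
  have b2 : (a:ℤ) * DD (wd t.1 t.2) ≤ a * m := mul_le_mul_of_nonneg_left hD.2 (by omega)
  have hq' : 2 * ((a:ℤ) * m) + 10 * a + 10 * m + 30 < q := by exact_mod_cast hq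
  obtain ⟨r, rfl⟩ := hodd
  have hs : ((2 * r + 1 - 2 * (m+1) : ℕ) : ℤ) = 2 * (r:ℤ) + 1 - 2 * (m + 1) := by omega
  push_cast at hq'
  have e : ∃ N : ℕ, ((2 * r + 1 - 2 * (m+1) : ℕ) - (0:ℤ) - a * e1 (wd t.1 t.2)) / 2 
      - (0 + a * e0 (wd t.1 t.2) + 1) / 2 - (m * 0 + a * DD (wd t.1 t.2)) = (N:ℤ) := by
    refine ⟨Int.toNat _, (Int.toNat_of_nonneg ?_).symm⟩
    rcases e0_cases (wd t.1 t.2) with h | h <;> rcases e1_cases (wd t.1 t.2) with h' | h' <;>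
      rw [h, h', hs] <;> omega
  obtain ⟨N, hN⟩ := e
  rw [good_count False m _ a 0 _ _ (by omega) (Or.inr ⟨by simp, rfl⟩) N hN]
  refine good_count False m _ a 1 _ _ (by omega) (Or.inr ⟨by simp, rfl⟩) N ?_
  rw [← hN, e0_rv, e1_rv, DD_rv, hs]
  push_cast
  rcases e0_cases (wd t.1 t.2) with h | h <;> rcases e1_cases (wd t.1 t.2) with h' | h' <;>
      rw [h, h'] <;> omega

/-! the polynomial part -/

noncomputable def BB (n : ℕ) : ℚ[X] := C (1 / (n.factorial : ℚ)) * (ascPochhammer ℚ n).comp (X + 1)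

lemma BB_eval (n N : ℕ) : (BB n).eval (N : ℚ) = ((N + n).choose n : ℚ) := by
  have h := Nat.ascFactorial_eq_factorial_mul_choose N n
  have h2 := ascPochhammer_nat_eq_ascFactorial (N+1) n
  have h3 : (ascPochhammer ℚ n).eval ((N:ℚ) + 1) = ((N+1).ascFactorial n : ℚ) := by
    rw [← h2, ascPochhammer_eval_cast]; push_cast; rfl
  have : (n.factorial : ℚ) ≠ 0 := by exact_mod_cast n.factorial_ne_zero
  simp only [BB, eval_mul, eval_C, eval_comp, eval_add, eval_X, eval_one, h3, h]
  push_cast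
  field_simp

/-- the descent number including the first one -/
def dd {m : ℕ} (t : TT m) : ℤ := e0 (wd t.1 t.2) + DD (wd t.1 t.2)
def ee {m : ℕ} (t : TT m) : ℤ := e1 (wd t.1 t.2)

lemma ee_cases {m : ℕ} (t : TT m) : ee t = 0 ∨ ee t = 1 := e1_cases _

theorem bc_count (m : ℕ) (a : ℕ) (ha : 1 ≤ a) (c : ℤ) (hc : c = 0 ∨ c = 1) (q : ℕ)
    (hq : 2 * (a * m) + 10 * a + 10 * m + 30 < q) :
    (Set.ncard {x | Valid True (m+1) q (1 - c) ((a:ℤ) - 1 + c) x} : ℚ) =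
    ∑ t : TT m, (BB (m+1)).eval ((((q - c - a * ee t) / 2 - (m + 1) * c - a * dd t : ℤ)) : ℚ) := by
  rw [count_sum True m q a c hc (by omega) (by omega), Nat.cast_sum]
  refine Finset.sum_congr rfl fun t _ => ?_
  have hD := DD_bounds (wd t.1 t.2)
  have b1 : 0 ≤ (a:ℤ) * DD (wd t.1 t.2) := mul_nonneg (by omega) hD.1
  have b2 : (a:ℤ) * DD (wd t.1 t.2) ≤ a * m := mul_le_mul_of_nonneg_left hD.2 (by omega)
  have hq' : 2 * ((a:ℤ) * m) + 10 * a + 10 * m + 30 < q := by exact_mod_cast hq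
  have e : ∃ N : ℕ, ((q:ℤ) - c - a * ee t) / 2 - (m + 1) * c - a * dd t = N := by
    refine ⟨Int.toNat _, (Int.toNat_of_nonneg ?_).symm⟩
    unfold dd ee
    rw [mul_add]
    rcases e0_cases (wd t.1 t.2) with h | h <;> rcases e1_cases (wd t.1 t.2) with h' | h' <;>
      rcases hc with rfl | rfl <;>
      rw [h, h'] <;> omega
  obtain ⟨N, hN⟩ := e
  rw [good_count True m _ a c _ _ (by omega) (Or.inl ⟨trivial, by omega, rfl⟩) N 
    (by rw [← hN]; unfold dd ee; ring), hN, Int.cast_natCast, BB_eval]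

lemma annihilate {ι : Type*} [Fintype ι] (c u : ι → ℚ) : ∀ (k : ℕ) (f : ℚ[X]), f.natDegree = k → f ≠ 0 →
    (∑ i, C (c i) * f.comp (X + C (u i)) = 0) → ∀ g : ℚ[X], g.natDegree ≤ k →
    ∑ i, c i * g.eval (u i) = 0 := by
  have base : ∀ f : ℚ[X], (∑ i, C (c i) * f.comp (X + C (u i)) = 0) → ∑ i, c i * f.eval (u i) = 0 := by
    intro f hf
    have := congrArg (eval 0) hf
    simpa [eval_finsetSum, eval_comp] using this
  intro k
  induction k with
  | zero =>
    intro f hf hf0 hH g hg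
    obtain ⟨x, rfl⟩ := natDegree_eq_zero.1 hf
    obtain ⟨y, rfl⟩ := natDegree_eq_zero.1 (Nat.le_zero.1 hg)
    have hx : x ≠ 0 := by rintro rfl; simp at hf0
    have := base _ hH
    simp only [eval_C, ← Finset.sum_mul] at this ⊢
    rw [(mul_eq_zero.1 this).resolve_right hx, zero_mul]
  | succ k ih =>
    intro f hf hf0 hH g hg
    have hd : (derivative f).natDegree = k := by
      rw [natDegree_derivative, hf]; rfl
    have hd0 : derivative f ≠ 0 := by
      intro h
      have := derivative_eq_zero.1 h
      omega
    have hH' : ∑ i, C (c i) * (derivative f).comp (X + C (u i)) = 0 := by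
      have := congrArg derivative hH
      simpa [derivative_sum, derivative_comp] using this
    have hlead : f.coeff (k+1) ≠ 0 := by
      rw [← hf]; exact leadingCoeff_ne_zero.2 hf0
    set lam := g.coeff (k+1) / f.coeff (k+1) with hlam
    have h1 : (g - C lam * f).natDegree ≤ k := by
      rw [natDegree_le_iff_coeff_eq_zero]
      intro N hN
      rw [coeff_sub, coeff_C_mul]
      rcases Nat.lt_or_ge (k+1) N with h | h
      · rw [coeff_eq_zero_of_natDegree_lt (by omega), coeff_eq_zero_of_natDegree_lt (by omega)]; simp
      · have : N = k + 1 := by omega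
        subst this
        rw [hlam]; field_simp; simp
    have h2 := ih _ hd hd0 hH' _ h1
    have h3 := base f hH
    have h4 : ∑ i, c i * g.eval (u i) = ∑ i, c i * (g - C lam * f).eval (u i) + 
        lam * ∑ i, c i * f.eval (u i) := by
      rw [Finset.mul_sum, ← Finset.sum_add_distrib]
      refine Finset.sum_congr rfl fun i _ => ?_
      simp only [eval_sub, eval_mul, eval_C]; ring
    rw [h4, h2, h3]; simp

lemma scale {ι : Type*} [Fintype ι] (c u : ι → ℚ) (f : ℚ[X]) 
    (hf : ∀ z : ℚ, ∑ i, c i * f.eval (z + u i) = 0) (a y : ℚ) :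
    ∑ i, c i * f.eval (y + a * u i) = 0 := by
  by_cases hf0 : f = 0
  · simp [hf0]
  have hH : ∑ i, C (c i) * f.comp (X + C (u i)) = 0 := by
    apply Polynomial.funext
    intro z
    have := hf z
    simpa [eval_finsetSum, eval_comp] using this
  have := annihilate c u _ f rfl hf0 hH (f.comp (C y + C a * X)) (by
    refine natDegree_comp_le.trans ?_
    have : (C y + C a * X).natDegree ≤ 1 := by compute_degree
    nlinarith)
  simpa [eval_comp] using this

/-- polynomials agreeing on an arithmetic progression -/
lemma poly_eq_of {P R : ℚ[X]} (s : ℚ) (M : ℕ) 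
    (h : ∀ r : ℕ, M < r → P.eval (2 * (r:ℚ) + s) = R.eval (2 * (r:ℚ) + s)) : P = R := by
  apply Polynomial.eq_of_infinite_eval_eq
  refine Set.Infinite.mono (s := (fun r : ℕ => 2 * (r:ℚ) + s) '' Set.Ioi M) ?_ ?_
  · rintro _ ⟨r, hr, rfl⟩; exact h r hr
  · refine (Set.Ioi_infinite M).image ?_
    intro x _ y _ hxy
    have : (x:ℚ) = y := by dsimp at hxy; linarith
    exact_mod_cast this

lemma sum_poly {ι : Type*} [Fintype ι] (B : ℚ[X]) (v : ι → ℚ) (y : ℚ) :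
    (∑ i, B.comp (C (1/2) * X + C (v i))).eval y = ∑ i, B.eval (y / 2 + v i) := by
  simp [eval_finsetSum, eval_comp]; ring_nf

lemma valid_trivial (m q : ℕ) [NeZero q] :
    Set.ncard {x | Valid True (m+1) q (1 - 0) ((1:ℕ) - 1 + 0 : ℤ) x} = q ^ (m+1) := by
  have : {x | Valid True (m+1) q (1 - 0) ((1:ℕ) - 1 + 0 : ℤ) x} = Set.univ := by
    ext x
    simp only [Set.mem_univ, iff_true]
    have h : ∀ y : ZMod q, Avoids y (1 - 0) ((1:ℕ) - 1 + 0 : ℤ) := by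
      intro y k h1 h2; push_cast at h2; omega
    exact ⟨fun i => ⟨fun _ => h _, h _⟩, fun i j _ => ⟨h _, h _⟩⟩
  rw [this, Set.ncard_univ]
  simp [Nat.card_eq_fintype_card]

/-- the case `a = 1`, even modulus -/
lemma even_id (m : ℕ) (y : ℚ) : y ^ (m+1) = 
    ∑ t : TT m, (BB (m+1)).eval (y / 2 + (- (ee t : ℚ) - dd t)) := by
  rw [← sum_poly]
  have : (X ^ (m+1) : ℚ[X]) = 
      ∑ t : TT m, (BB (m+1)).comp (C (1/2) * X + C (- (ee t : ℚ) - dd t)) := by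
    refine poly_eq_of 0 (20 * m + 40) fun r hr => ?_
    have : NeZero (2 * r) := ⟨by omega⟩
    have h := bc_count m 1 le_rfl 0 (Or.inl rfl) (2 * r) (by omega)
    rw [valid_trivial] at h
    rw [sum_poly, eval_pow, eval_X]
    push_cast at h
    rw [add_zero, h]
    refine Finset.sum_congr rfl fun t _ => ?_
    congr 1
    have : ((2 * (r:ℤ) - 0 - 1 * ee t) / 2 - (m + 1) * 0 - 1 * dd t) = r - ee t - dd t := by
      rcases ee_cases t with h | h <;> rw [h] <;> omega
    have this := congrArg (Int.cast : ℤ → ℚ) this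
    push_cast at this
    rw [this]; ring
  rw [← this]; simp

lemma odd_id (m : ℕ) (y : ℚ) : y ^ (m+1) = 
    ∑ t : TT m, (BB (m+1)).eval (y / 2 + (- (1 / 2 : ℚ) - dd t)) := by
  rw [← sum_poly]
  have : (X ^ (m+1) : ℚ[X]) = 
      ∑ t : TT m, (BB (m+1)).comp (C (1/2) * X + C (- (1 / 2 : ℚ) - dd t)) := by
    refine poly_eq_of 1 (20 * m + 40) fun r hr => ?_
    have : NeZero (2 * r + 1) := ⟨by omega⟩
    have h := bc_count m 1 le_rfl 0 (Or.inl rfl) (2 * r + 1) (by omega)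
    rw [valid_trivial] at h
    rw [sum_poly, eval_pow, eval_X]
    push_cast at h
    rw [h]
    refine Finset.sum_congr rfl fun t _ => ?_
    congr 1
    have : ((2 * (r:ℤ) + 1 - 0 - 1 * ee t) / 2 - (m + 1) * 0 - 1 * dd t) = r - dd t := by
      rcases ee_cases t with h | h <;> rw [h] <;> omega
    have this := congrArg (Int.cast : ℤ → ℚ) this
    push_cast at this
    rw [this]; ring
  rw [← this]; simp

theorem part_two (m a : ℕ) (haodd : Odd a) (P Q : ℚ[X])
    (hP : ∃ M : ℕ, ∀ q : ℕ, Odd q → M < q → 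
      P.eval (q : ℚ) = (Set.ncard {x | Valid True (m+1) q 0 (a:ℤ) x} : ℚ))
    (hQ : ∃ M : ℕ, ∀ q : ℕ, Odd q → M < q → 
      Q.eval (q : ℚ) = (Set.ncard {x | Valid True (m+1) q 1 ((a:ℤ)-1) x} : ℚ)) :
    P = Q.comp (X - C ((2 * (m+1) + 1 : ℕ) : ℚ)) := by
  obtain ⟨M1, hP⟩ := hP
  obtain ⟨M2, hQ⟩ := hQ
  obtain ⟨α, rfl⟩ := haodd
  set K := 2 * ((2*α+1) * m) + 10 * (2*α+1) + 10 * m + 30 with hK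
  have hP' : P = ∑ t : TT m, (BB (m+1)).comp (C (1/2) * X + 
      C (-(1/2 : ℚ) - (m+1) - ee t * (α + 1) - (2*α+1) * dd t)) := by
    refine poly_eq_of 1 (K + M1) fun r hr => ?_
    have h := bc_count m (2*α+1) (by omega) 1 (Or.inr rfl) (2 * r + 1) (by omega)
    simp only [sub_self, sub_add_cancel] at h
    have h2 := hP (2*r+1) ⟨r, rfl⟩ (by omega)
    rw [h] at h2
    push_cast at h2
    rw [h2, sum_poly]
    refine Finset.sum_congr rfl fun t _ => ?_
    congr 1
    have : ((2 * (r:ℤ) + 1 - 1 - (2*α+1) * ee t) / 2 - (m + 1) * 1 - (2*α+1) * dd t) 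
        = r - (m+1) - ee t * (α+1) - (2*α+1) * dd t := by
      rcases ee_cases t with h | h <;> rw [h] <;> omega
    have this := congrArg (Int.cast : ℤ → ℚ) this
    push_cast at this
    rw [this]; ring
  have hQ' : Q = ∑ t : TT m, (BB (m+1)).comp (C (1/2) * X + 
      C (-(1/2 : ℚ) - ee t * α - (2*α+1) * dd t)) := by
    refine poly_eq_of 1 (K + M2) fun r hr => ?_
    have h := bc_count m (2*α+1) (by omega) 0 (Or.inl rfl) (2 * r + 1) (by omega)
    simp only [sub_zero, add_zero] at h
    have h2 := hQ (2*r+1) ⟨r, rfl⟩ (by omega)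
    rw [h] at h2
    push_cast at h2
    rw [h2, sum_poly]
    refine Finset.sum_congr rfl fun t _ => ?_
    congr 1
    have : ((2 * (r:ℤ) + 1 - (2*α+1) * ee t) / 2 - (m + 1) * 0 - (2*α+1) * dd t) 
        = r - ee t * α - (2*α+1) * dd t := by
      rcases ee_cases t with h | h <;> rw [h] <;> omega
    have this := congrArg (Int.cast : ℤ → ℚ) this
    push_cast at this
    rw [this]; ring
  -- the key identity
  let f : ℚ[X] := BB (m+1) - (BB (m+1)).comp (X - C (1/2))
  have fe : ∀ z, f.eval z = (BB (m+1)).eval z - (BB (m+1)).eval (z - 1/2) := by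
    intro z; simp [f, eval_comp]
  have key : ∀ z : ℚ, ∑ t : TT m, (1 - 2 * (ee t : ℚ)) * f.eval (z + (-(2 * (dd t : ℚ) + ee t) / 2)) = 0 := by
    intro z
    have h1 := even_id m (2 * z)
    have h2 := odd_id m (2 * z)
    rw [h1, ← sub_eq_zero, ← Finset.sum_sub_distrib] at h2
    rw [← h2]
    refine Finset.sum_congr rfl fun t _ => ?_
    rw [fe]
    rcases ee_cases t with h | h <;> rw [h] <;> push_cast
    · ring_nf
    · ring_nf
  have key2 := fun y => scale _ _ f key (2 * α + 1) y
  apply Polynomial.funext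
  intro y
  rw [eval_comp, hP', hQ', sum_poly, sum_poly, ← sub_eq_zero, ← Finset.sum_sub_distrib]
  rw [← key2 (y / 2 - 1/2 - (m+1))]
  refine Finset.sum_congr rfl fun t _ => ?_
  rw [fe]
  simp only [eval_sub, eval_X, eval_C]
  rcases ee_cases t with h | h <;> rw [h] <;> push_cast
  · ring_nf
  · ring_nf

/-- Proposition 4.7. For odd `a`: (i) for large odd `q`,
`N_C(n,q,0,a) = N_C(n,q-2n,1,a-1)`; (ii) if `P` interpolates `N_BC(n,·,0,a)` and
`Q` interpolates `N_BC(n,·,1,a-1)` on large odd integers, then `P(X) = Q(X-(2n+1))`. -/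
theorem statement11 (n a : ℕ) (hn : 2 ≤ n) (ha : 1 ≤ a) (haodd : Odd a) :
    (∃ N : ℕ, ∀ q : ℕ, Odd q → N < q →
      N_C n q 0 (a : ℤ) = N_C n (q - 2 * n) 1 ((a : ℤ) - 1)) ∧
    (∀ P Q : ℚ[X],
      (∃ M : ℕ, ∀ q : ℕ, Odd q → M < q → P.eval (q : ℚ) = (N_BC n q 0 (a : ℤ) : ℚ)) →
      (∃ M : ℕ, ∀ q : ℕ, Odd q → M < q → Q.eval (q : ℚ) = (N_BC n q 1 ((a : ℤ) - 1) : ℚ)) →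
      P = Q.comp (X - C ((2 * n + 1 : ℕ) : ℚ))) := by
  obtain ⟨m, rfl⟩ : ∃ m, n = m + 1 := ⟨n - 1, by omega⟩
  refine ⟨⟨2 * (a * m) + 10 * a + 10 * m + 30, fun q hodd hq => ?_⟩, fun P Q hP hQ => ?_⟩
  · have h := part_one m a ha q hodd hq
    simpa only [N_C, Valid, false_imp_iff, true_and] using h
  · refine part_two m a haodd P Q ?_ ?_
    · simpa only [N_BC, Valid, true_imp_iff] using hP
    · simpa only [N_BC, Valid, true_imp_iff] using hQ
end
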